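/- arXiv:2502.15249 — 5 statements merged into one kernel-verified Lean document; each statement's English description precedes it below -/
import Mathlib

section
/- The series Σ_{k=0}^∞ (−1/1024)^k · ((3/2)_k)^5 / (((1)_k)^4 · (2)_k) · (13120k⁶ − 2368k⁵ − 2320k⁴ − 4320k³ − 1620k² + 972k + 729) / ((2k−3)^4 (2k−1)^4) converges and equals −64/π². -/
/-!
The sum is evaluated by a Wilf–Zeilberger pair coming from Dougall's `₅H₅` summation. Put
`K(n, k) = A(n) (Γ(n + k + 1/2) / Γ(2n + k + 2)) ^ 4` with `A(n) = (-1)^n (1/2)_n ^ 6 / (2n)!`.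
There are polynomials `p`, `q` such that `G = K p` and `F = K q` satisfy
`F(n + 1, k) - F(n, k) = G(n, k + 1) - G(n, k)` (lemma `wz`). Since `F(0, k) = 0` and
`F(n, k) → 0` geometrically as `n → ∞`, the sum `∑ n, G(n, k)` does not depend on `k`.

As `k → ∞`, the terms with `n ≥ 1` contribute nothing (`tendsto_tail`), while the Wallis product
gives `G(0, k) → 2` (`tendsto_wzG_zero`); hence the sum is `2` for every integer `k ≥ -3`.
At `k = -3` the term `G(0, -3)` vanishes because of the factor `1 / Γ(-1)`, and `G(n + 1, -3)` is
`-π ^ 2 / 32` times the `n`-th term of the required series (`wzK_target`). At `k = 0` the same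
identity is Guillera's series with `820 n ^ 2 + 180 n + 13`. In the code, `k = j - 3` with `j : ℕ`.
-/

/-- The Pochhammer symbol `(x)_k = x (x+1) ⋯ (x+k-1) = Γ(x+k)/Γ(x)`. -/
noncomputable def poch (x : ℝ) (k : ℕ) : ℝ := ∏ i ∈ Finset.range k, (x + i)

open Filter Topology

noncomputable section

/-! ### The WZ pair -/

/-- The `n`-dependent part `(-1)^n (1/2)_n^6 / (2n)!` of the WZ pair. -/
def coefA (n : ℕ) : ℝ := ∏ i ∈ Finset.range n, (-(2 * (i : ℝ) + 1) ^ 5 / (128 * ((i : ℝ) + 1)))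

/-- The hypergeometric kernel of the WZ pair, with first coordinate `n` and second coordinate
`k = j - 3`. Since `Real.Gamma` vanishes at the non-positive integers and `x / 0 = 0`, the
factor `1 / Γ` has its true value `0` there. -/
def wzK (n j : ℕ) : ℝ :=
  coefA n * (Real.Gamma (n + j - 5 / 2) / Real.Gamma (2 * n + j - 1)) ^ 4

/-- The rational certificate (a polynomial here), in the coordinates `(n, k)`. -/
def cert (n k : ℝ) : ℝ :=
  (13 / 64 + 71 / 16 * n + 643 / 16 * n ^ 2 + 353 / 2 * n ^ 3 + 1603 / 4 * n ^ 4 + 455 * n ^ 5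
      + 205 * n ^ 6)
    + (31 / 16 + 283 / 8 * n + 475 / 2 * n ^ 2 + 731 * n ^ 3 + 1051 * n ^ 4 + 574 * n ^ 5) * k
    + (15 / 2 + 104 * n + 492 * n ^ 2 + 960 * n ^ 3 + 664 * n ^ 4) * k ^ 2
    + (15 + 146 * n + 436 * n ^ 2 + 408 * n ^ 3) * k ^ 3
    + (65 / 4 + 99 * n + 141 * n ^ 2) * k ^ 4
    + (9 + 26 * n) * k ^ 5 + 2 * k ^ 6

/-- The member of the WZ pair that is summed over `n`. -/
def wzG (n j : ℕ) : ℝ := wzK n j * cert n (j - 3)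

/-- The member of the WZ pair whose vanishing at `n = 0` and as `n → ∞` makes
`∑ n, wzG n j` independent of `j`. -/
def wzF (n j : ℕ) : ℝ :=
  wzK n j * (2 * n * (6 * n + 4 * j - 11) * (2 * n + j - 2) ^ 4)

lemma coefA_succ (n : ℕ) :
    coefA (n + 1) = coefA n * (-(2 * (n : ℝ) + 1) ^ 5 / (128 * ((n : ℝ) + 1))) :=
  Finset.prod_range_succ _ _

lemma inv_Gamma_eq (x : ℝ) : (Real.Gamma x)⁻¹ = x * (Real.Gamma (x + 1))⁻¹ := by
  rcases eq_or_ne x 0 with rfl | hx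
  · simp
  · rw [Real.Gamma_add_one hx, mul_inv, mul_inv_cancel_left₀ hx]

lemma half_ne (n j : ℕ) : (n : ℝ) + j - 5 / 2 ≠ 0 := by
  intro h
  have h2 : (2 * ((n : ℤ) + j) : ℝ) = (5 : ℤ) := by push_cast; linarith
  have h3 : 2 * ((n : ℤ) + j) = 5 := by exact_mod_cast h2
  omega

/-- The WZ equation. -/
lemma wz (n j : ℕ) : wzF (n + 1) j - wzF n j = wzG n (j + 1) - wzG n j := by
  have hn : (n : ℝ) + 1 ≠ 0 := by positivity
  -- All four terms are polynomial multiples of the same `coefA n * u ^ 4 * w ^ 4`.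
  set u := Real.Gamma ((n : ℝ) + j - 5 / 2) with hu
  set w := (Real.Gamma (2 * (n : ℝ) + j))⁻¹ with hw
  have hu1 : Real.Gamma ((n : ℝ) + j - 5 / 2 + 1) = ((n : ℝ) + j - 5 / 2) * u :=
    Real.Gamma_add_one (half_ne n j)
  have e0 : (Real.Gamma (2 * (n : ℝ) + j - 1))⁻¹ = (2 * n + j - 1) * w := by
    rw [inv_Gamma_eq, hw]; ring_nf
  have hw2 : w = (2 * (n : ℝ) + j) * (Real.Gamma (2 * (n : ℝ) + j + 1))⁻¹ := inv_Gamma_eq _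
  have k0 : wzK n j = coefA n * (u * ((2 * n + j - 1) * w)) ^ 4 := by
    rw [wzK, div_eq_mul_inv, e0]
  have k1 : wzK n (j + 1) = coefA n * (((n : ℝ) + j - 5 / 2) * u * w) ^ 4 := by
    rw [wzK, div_eq_mul_inv, ← hu1, hw]; push_cast; ring_nf
  have k2 : wzK (n + 1) j * (2 * (n + 1 : ℕ) + j - 2) ^ 4 =
      coefA n * (-(2 * (n : ℝ) + 1) ^ 5 / (128 * ((n : ℝ) + 1))) *
        (((n : ℝ) + j - 5 / 2) * u * w) ^ 4 := by
    rw [wzK, div_eq_mul_inv, ← hu1, hw2, coefA_succ]; push_cast; ring_nf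
  have f1 : wzF (n + 1) j = coefA n * (-(2 * (n : ℝ) + 1) ^ 5 / 64) *
        (((n : ℝ) + j - 5 / 2) * u * w) ^ 4 * (6 * n + 4 * j - 5) := by
    have : wzF (n + 1) j = wzK (n + 1) j * (2 * (n + 1 : ℕ) + j - 2) ^ 4 *
        (2 * (n + 1) * (6 * n + 4 * j - 5)) := by
      rw [wzF]; push_cast; ring
    rw [this, k2]; field_simp; ring
  rw [f1, wzF, wzG, wzG, k0, k1, cert, cert]
  push_cast
  ring

lemma sum_wzG_succ (N j : ℕ) :
    ∑ n ∈ Finset.range N, wzG n (j + 1) = ∑ n ∈ Finset.range N, wzG n j + wzF N j := by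
  induction N with
  | zero => simp [wzF]
  | succ N ih =>
    rw [Finset.sum_range_succ, Finset.sum_range_succ, ih]
    linarith [wz N j]

/-! ### Geometric decay in `n` -/

lemma wzK_succ (n j : ℕ) (h : 2 ≤ 2 * n + j) :
    wzK (n + 1) j = wzK n j * (-(2 * (n : ℝ) + 1) ^ 5 / (128 * ((n : ℝ) + 1)) *
      (((n : ℝ) + j - 5 / 2) / ((2 * n + j - 1) * (2 * n + j))) ^ 4) := by
  have h' : (2 : ℝ) ≤ 2 * n + j := by exact_mod_cast h
  have h1 : 2 * (n : ℝ) + j - 1 ≠ 0 := by linarith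
  have h2 : 2 * (n : ℝ) + j ≠ 0 := by linarith
  have hu1 := Real.Gamma_add_one (half_ne n j)
  have g1 := Real.Gamma_add_one h1
  have g2 := Real.Gamma_add_one h2
  rw [sub_add_cancel] at g1
  have e1 : ((n + 1 : ℕ) : ℝ) + j - 5 / 2 = n + j - 5 / 2 + 1 := by push_cast; ring
  have e2 : 2 * ((n + 1 : ℕ) : ℝ) + j - 1 = 2 * n + j + 1 := by push_cast; ring
  rw [wzK, wzK, e1, e2, hu1, g2, g1, coefA_succ, ← mul_assoc (2 * (n : ℝ) + j),
    mul_comm (2 * (n : ℝ) + j), mul_div_mul_comm]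
  ring

lemma abs_wzK_succ_le (n j : ℕ) (h : 2 ≤ n ∨ 3 ≤ j) :
    |wzK (n + 1) j| ≤ |wzK n j| * ((((2 * n + 1) / (2 * n + j) : ℝ)) ^ 4 / 64) := by
  have hj : (2 : ℝ) ≤ n ∨ (3 : ℝ) ≤ j := by
    rcases h with h | h
    · left; exact_mod_cast h
    · right; exact_mod_cast h
  have n0 : (0 : ℝ) ≤ n := n.cast_nonneg
  have j0 : (0 : ℝ) ≤ j := j.cast_nonneg
  have p1 : 0 < 2 * (n : ℝ) + j - 1 := by rcases hj with h | h <;> linarith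
  have p2 : 0 < 2 * (n : ℝ) + j := by linarith
  rw [wzK_succ n j (by omega), abs_mul, abs_mul, abs_div, abs_neg, abs_pow, abs_pow, abs_div]
  refine mul_le_mul_of_nonneg_left ?_ (abs_nonneg _)
  rw [abs_of_pos (by positivity : (0 : ℝ) < 2 * n + 1),
    abs_of_pos (by positivity : (0 : ℝ) < 128 * (n + 1)), abs_of_pos (mul_pos p1 p2)]
  have q : |(n : ℝ) + j - 5 / 2| ≤ 2 * n + j - 1 := by
    rw [abs_le]; constructor <;> rcases hj with h | h <;> linarith
  have a1 : (2 * (n : ℝ) + 1) ^ 5 / (128 * (n + 1)) ≤ (2 * n + 1) ^ 4 / 64 := by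
    rw [div_le_div_iff₀ (by positivity) (by norm_num)]
    have : (0 : ℝ) < (2 * n + 1) ^ 4 := by positivity
    nlinarith
  have a2 : |(n : ℝ) + j - 5 / 2| / ((2 * n + j - 1) * (2 * n + j)) ≤ 1 / (2 * n + j) := by
    rw [div_le_div_iff₀ (mul_pos p1 p2) p2]
    nlinarith
  calc _ ≤ (2 * (n : ℝ) + 1) ^ 4 / 64 * (1 / (2 * n + j)) ^ 4 := by gcongr
    _ = _ := by rw [div_pow, div_pow]; ring

lemma abs_wzK_succ_le_div (n j : ℕ) (h : 2 ≤ n ∨ 3 ≤ j) :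
    |wzK (n + 1) j| ≤ |wzK n j| / 16 := by
  refine (abs_wzK_succ_le n j h).trans ?_
  have n0 : (0 : ℝ) ≤ n := n.cast_nonneg
  have j0 : (0 : ℝ) ≤ j := j.cast_nonneg
  have b : (2 * n + 1) / (2 * n + j) ≤ (5 / 4 : ℝ) := by
    rcases h with h | h
    · have : (2 : ℝ) ≤ n := by exact_mod_cast h
      rw [div_le_iff₀ (by linarith)]; linarith
    · have : (3 : ℝ) ≤ j := by exact_mod_cast h
      rw [div_le_iff₀ (by linarith)]; linarith
  have b4 : ((2 * n + 1) / (2 * n + j) : ℝ) ^ 4 ≤ (5 / 4) ^ 4 := by gcongr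
  rw [div_eq_mul_inv]
  refine mul_le_mul_of_nonneg_left ?_ (abs_nonneg _)
  norm_num at b4 ⊢
  linarith

lemma abs_wzK_add_le (m n j : ℕ) (h : 2 ≤ m ∨ 3 ≤ j) :
    |wzK (n + m) j| ≤ |wzK m j| * (1 / 16) ^ n := by
  induction n with
  | zero => simp
  | succ n ih =>
    have := abs_wzK_succ_le_div (n + m) j (by omega)
    rw [show n + 1 + m = n + m + 1 by ring, pow_succ]
    linarith

lemma abs_cert_le (n j : ℕ) :
    |cert n ((j : ℝ) - 3)| ≤ 100000 * (((n : ℝ) + 1) ^ 6 * ((j : ℝ) + 1) ^ 6) := by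
  rw [cert, abs_le]
  constructor
  · rw [← sub_nonneg]; ring_nf; positivity
  · rw [← sub_nonneg]; ring_nf; positivity

lemma abs_certF_le (n j : ℕ) :
    |2 * (n : ℝ) * (6 * n + 4 * j - 11) * (2 * n + j - 2) ^ 4|
      ≤ 100000 * (((n : ℝ) + 1) ^ 6 * ((j : ℝ) + 1) ^ 6) := by
  rw [abs_le]
  constructor
  · rw [← sub_nonneg]; ring_nf; positivity
  · rw [← sub_nonneg]; ring_nf; positivity

lemma summable_aux (m : ℕ) :
    Summable fun n : ℕ => (((n + m : ℕ) : ℝ) + 1) ^ 6 * (1 / 16 : ℝ) ^ n := by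
  have h := summable_pow_mul_geometric_of_norm_lt_one (R := ℝ) 6 (r := 1 / 16) (by norm_num)
  have h2 := ((summable_nat_add_iff (m + 1)).2 h).mul_left ((16 : ℝ) ^ (m + 1))
  refine h2.congr fun n => ?_
  rw [pow_add (1 / 16 : ℝ) n, one_div_pow (16 : ℝ) (m + 1)]
  push_cast
  field_simp
  ring

/-- Geometric bound for the kernel times any factor of the size of the certificates. -/
lemma abs_wzK_mul_le (m n j : ℕ) (h : 2 ≤ m ∨ 3 ≤ j) {x : ℝ}
    (hx : |x| ≤ 100000 * ((((n + m : ℕ) : ℝ) + 1) ^ 6 * ((j : ℝ) + 1) ^ 6)) :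
    |wzK (n + m) j * x| ≤ (|wzK m j| * 100000 * ((j : ℝ) + 1) ^ 6) *
      ((((n + m : ℕ) : ℝ) + 1) ^ 6 * (1 / 16 : ℝ) ^ n) := by
  rw [abs_mul]
  calc _ ≤ (|wzK m j| * (1 / 16) ^ n) *
        (100000 * ((((n + m : ℕ) : ℝ) + 1) ^ 6 * ((j : ℝ) + 1) ^ 6)) :=
        mul_le_mul (abs_wzK_add_le m n j h) hx (abs_nonneg _) (by positivity)
    _ = _ := by ring

/-! ### Independence of the second parameter -/

lemma summable_wzG (j : ℕ) : Summable fun n => wzG n j := by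
  rw [← summable_nat_add_iff 2]
  refine Summable.of_norm_bounded
    ((summable_aux 2).mul_left (|wzK 2 j| * 100000 * ((j : ℝ) + 1) ^ 6)) fun n => ?_
  exact abs_wzK_mul_le 2 n j (by simp) (abs_cert_le _ _)

lemma tendsto_wzF (j : ℕ) : Tendsto (fun n => wzF n j) atTop (𝓝 0) := by
  rw [← tendsto_add_atTop_iff_nat 2]
  refine squeeze_zero_norm (fun n => ?_)
    (((summable_aux 2).mul_left (|wzK 2 j| * 100000 * ((j : ℝ) + 1) ^ 6)).tendsto_atTop_zero)
  exact abs_wzK_mul_le 2 n j (by simp) (abs_certF_le _ _)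

lemma tsum_wzG_succ (j : ℕ) : ∑' n, wzG n (j + 1) = ∑' n, wzG n j := by
  refine tendsto_nhds_unique (summable_wzG (j + 1)).hasSum.tendsto_sum_nat ?_
  simp_rw [sum_wzG_succ]
  simpa using (summable_wzG j).hasSum.tendsto_sum_nat.add (tendsto_wzF j)

lemma tsum_wzG_eq (j : ℕ) : ∑' n, wzG n j = ∑' n, wzG n 0 := by
  induction j with
  | zero => rfl
  | succ j ih => rw [tsum_wzG_succ, ih]

/-! ### The limit in the second parameter -/

/-- The Wallis product as a quotient of Gamma values. -/
lemma wallis_Gamma (i : ℕ) : Real.Wallis.W i * ((Real.Gamma (i + 1 / 2)) ^ 2 * (i + 1 / 2)) =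
    Real.pi / 2 * (Real.Gamma (i + 1)) ^ 2 := by
  induction i with
  | zero =>
    rw [Nat.cast_zero, zero_add, zero_add, Real.Gamma_one_half_eq, Real.sq_sqrt Real.pi_pos.le]
    simp [Real.Wallis.W, div_eq_mul_inv]
  | succ i ih =>
    have h1 : (i : ℝ) + 1 / 2 ≠ 0 := by positivity
    have h2 : (i : ℝ) + 1 ≠ 0 := by positivity
    have e1 : ((i + 1 : ℕ) : ℝ) + 1 / 2 = i + 1 / 2 + 1 := by push_cast; ring
    rw [Real.Wallis.W_succ, e1, Nat.cast_succ, Real.Gamma_add_one h1, Real.Gamma_add_one h2,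
      mul_pow, mul_pow]
    have h3 : 2 * (i : ℝ) + 1 ≠ 0 := by positivity
    have h4 : 2 * (i : ℝ) + 3 ≠ 0 := by positivity
    calc _ = (Real.Wallis.W i * ((Real.Gamma (i + 1 / 2)) ^ 2 * (i + 1 / 2))) * (i + 1) ^ 2 := by
          field_simp; ring
      _ = _ := by rw [ih]; ring

/-- The kernel at `n = 0`, that is, `k⁻⁶` up to a factor tending to `1`. -/
lemma wzK_zero (i : ℕ) : wzK 0 (i + 3) =
    (Real.pi / 2 / Real.Wallis.W i) ^ 2 *
      ((1 / ((i : ℝ) + 1)) ^ 6 / (1 - 1 / ((i : ℝ) + 1) / 2) ^ 2) := by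
  have hW := (Real.Wallis.W_pos i).ne'
  have hG : Real.Gamma ((i : ℝ) + 1) ≠ 0 := (Real.Gamma_pos_of_pos (by positivity)).ne'
  have h1 : (i : ℝ) + 1 / 2 ≠ 0 := by positivity
  have h2 : (i : ℝ) + 1 ≠ 0 := by positivity
  have e1 : ((0 : ℕ) : ℝ) + ((i + 3 : ℕ) : ℝ) - 5 / 2 = i + 1 / 2 := by push_cast; ring
  have e2 : 2 * ((0 : ℕ) : ℝ) + ((i + 3 : ℕ) : ℝ) - 1 = i + 1 + 1 := by push_cast; ring
  have e3 : 1 - 1 / ((i : ℝ) + 1) / 2 = (i + 1 / 2) / (i + 1) := by field_simp; ring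
  have key : (Real.Gamma (i + 1 / 2)) ^ 2 / (Real.Gamma (i + 1)) ^ 2 =
      Real.pi / 2 / Real.Wallis.W i / (i + 1 / 2) := by
    rw [div_eq_div_iff (by positivity) h1, div_mul_eq_mul_div, eq_div_iff hW, ← wallis_Gamma]
    ring
  rw [wzK, e1, e2, e3, Real.Gamma_add_one h2]
  calc _ = ((Real.Gamma (i + 1 / 2)) ^ 2 / (Real.Gamma (i + 1)) ^ 2) ^ 2 / ((i : ℝ) + 1) ^ 4 := by
        simp only [coefA, Finset.range_zero, Finset.prod_empty, div_pow, mul_pow]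
        field_simp
    _ = _ := by
      rw [key]
      field_simp

lemma tendsto_inv_nat : Tendsto (fun i : ℕ => 1 / ((i : ℝ) + 1)) atTop (𝓝 0) :=
  tendsto_one_div_add_atTop_nhds_zero_nat

lemma tendsto_wallis_ratio :
    Tendsto (fun i : ℕ => (Real.pi / 2 / Real.Wallis.W i) ^ 2) atTop (𝓝 1) := by
  have hp : Real.pi / 2 ≠ 0 := by positivity
  have := ((tendsto_const_nhds (x := Real.pi / 2)).div
    Real.Wallis.tendsto_W_nhds_pi_div_two hp).pow 2
  rwa [div_self hp, one_pow] at this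

/-- Asymptotics of the kernel at `n = 0` against a polynomial `x⁻⁶ p(x)` in `x = 1 / (i + 1)`. -/
lemma tendsto_wzK_zero (p : ℝ → ℝ) (hp : Continuous p) :
    Tendsto (fun i : ℕ => wzK 0 (i + 3) * (((i : ℝ) + 1) ^ 6 * p (1 / ((i : ℝ) + 1))))
      atTop (𝓝 (p 0)) := by
  have hc : ContinuousAt (fun x : ℝ => p x / (1 - x / 2) ^ 2) 0 :=
    hp.continuousAt.div (by fun_prop) (by norm_num)
  have h1 := tendsto_wallis_ratio.mul (hc.tendsto.comp tendsto_inv_nat)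
  simp only [zero_div, sub_zero, one_pow, div_one, one_mul] at h1
  refine h1.congr fun i => ?_
  have h2 : (i : ℝ) + 1 ≠ 0 := by positivity
  rw [wzK_zero, Function.comp]
  have : (1 / ((i : ℝ) + 1)) ^ 6 * ((i : ℝ) + 1) ^ 6 = 1 := by
    rw [← mul_pow, one_div_mul_cancel h2, one_pow]
  linear_combination (-(Real.pi / 2 / Real.Wallis.W i) ^ 2 * p (1 / ((i : ℝ) + 1)) /
    (1 - 1 / ((i : ℝ) + 1) / 2) ^ 2) * this

lemma tendsto_wzG_zero : Tendsto (fun i => wzG 0 (i + 3)) atTop (𝓝 2) := by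
  -- `x ^ 6 * cert 0 (1 / x - 1)`, expanded
  have h := tendsto_wzK_zero (fun x => 13 / 64 * x ^ 6 + 31 / 16 * (1 - x) * x ^ 5
    + 15 / 2 * (1 - x) ^ 2 * x ^ 4 + 15 * (1 - x) ^ 3 * x ^ 3 + 65 / 4 * (1 - x) ^ 4 * x ^ 2
    + 9 * (1 - x) ^ 5 * x + 2 * (1 - x) ^ 6) (by fun_prop)
  norm_num only at h
  refine h.congr fun i => ?_
  have h2 : (i : ℝ) + 1 ≠ 0 := by positivity
  rw [wzG, cert]
  congr 1
  push_cast
  field_simp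
  ring

lemma tendsto_tail : Tendsto (fun i => ∑' n, wzG (n + 1) (i + 3)) atTop (𝓝 0) := by
  set S := ∑' n : ℕ, (((n + 1 : ℕ) : ℝ) + 1) ^ 6 * (1 / 16 : ℝ) ^ n with hS
  have S0 : 0 ≤ S := tsum_nonneg fun n => by positivity
  have h := (tendsto_wzK_zero (fun x => x ^ 4) (by fun_prop)).const_mul (100000 * 4 ^ 6 * S)
  rw [zero_pow (by norm_num), mul_zero] at h
  refine squeeze_zero_norm (fun i => ?_) h
  have hb := tsum_of_norm_bounded (f := fun n => wzG (n + 1) (i + 3)) ((summable_aux 1).hasSum.mul_left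
    (|wzK 1 (i + 3)| * 100000 * (((i + 3 : ℕ) : ℝ) + 1) ^ 6))
    (fun n => abs_wzK_mul_le 1 n (i + 3) (by simp) (abs_cert_le _ _))
  refine hb.trans ?_
  have h2 : (0 : ℝ) < (i : ℝ) + 1 := by positivity
  have k0 : 0 ≤ wzK 0 (i + 3) := by rw [wzK_zero]; positivity
  have k1 : |wzK 1 (i + 3)| ≤ wzK 0 (i + 3) * (1 / ((i : ℝ) + 1)) ^ 4 := by
    have := abs_wzK_succ_le 0 (i + 3) (by simp)
    rw [abs_of_nonneg k0] at this
    refine this.trans (mul_le_mul_of_nonneg_left ?_ k0)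
    refine (div_le_self (by positivity) (by norm_num)).trans ?_
    refine pow_le_pow_left₀ (by positivity) ?_ 4
    rw [div_le_div_iff₀ (by positivity) h2]
    push_cast
    linarith
  have k2 : (((i + 3 : ℕ) : ℝ) + 1) ^ 6 ≤ 4 ^ 6 * ((i : ℝ) + 1) ^ 6 := by
    rw [← mul_pow]; gcongr; push_cast; linarith
  calc _ ≤ (wzK 0 (i + 3) * (1 / ((i : ℝ) + 1)) ^ 4) * 100000 * (4 ^ 6 * ((i : ℝ) + 1) ^ 6) * S := by
        gcongr
    _ = _ := by ring

lemma tsum_wzG_zero : ∑' n, wzG n 0 = 2 := by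
  have h : Tendsto (fun i => ∑' n, wzG n (i + 3)) atTop (𝓝 (2 + 0)) := by
    refine (tendsto_wzG_zero.add tendsto_tail).congr fun i => ?_
    exact ((summable_wzG (i + 3)).tsum_eq_zero_add).symm
  simp_rw [tsum_wzG_eq] at h
  simpa using tendsto_nhds_unique tendsto_const_nhds h

/-! ### Specialization to `k = -3` -/

/-- The kernel along `k = -3`, in terms of Pochhammer symbols. -/
lemma wzK_target (k : ℕ) :
    (-1/1024 : ℝ) ^ k * (poch (3/2) k) ^ 5 / ((poch 1 k) ^ 4 * poch 2 k) /
      ((2 * (k : ℝ) - 3) ^ 4 * (2 * (k : ℝ) - 1) ^ 4) =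
    -(1 / 2) / Real.pi ^ 2 * wzK (k + 1) 0 := by
  have hodd : ∀ m : ℕ, ∀ c : ℤ, c % 2 = 1 → 2 * (m : ℝ) - c ≠ 0 := by
    intro m c hc h
    have : 2 * (m : ℤ) - c = 0 := by exact_mod_cast h
    omega
  induction k with
  | zero =>
    have g : Real.Gamma (-(3 / 2)) = 4 / 3 * √Real.pi := by
      have h1 := Real.Gamma_add_one (s := -(3 / 2)) (by norm_num)
      have h2 := Real.Gamma_add_one (s := -(1 / 2)) (by norm_num)
      norm_num at h1 h2
      rw [show (1 / 2 : ℝ) = 1 / 2 by rfl, Real.Gamma_one_half_eq] at h2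
      linarith
    have g1 : ((0 + 1 : ℕ) : ℝ) + ((0 : ℕ) : ℝ) - 5 / 2 = -(3 / 2) := by norm_num
    have g2 : 2 * ((0 + 1 : ℕ) : ℝ) + ((0 : ℕ) : ℝ) - 1 = 1 := by norm_num
    have s4 : √Real.pi ^ 4 = Real.pi ^ 2 := by
      rw [show 4 = 2 * 2 by rfl, pow_mul, Real.sq_sqrt Real.pi_pos.le]
    rw [wzK, g1, g2, g, Real.Gamma_one, coefA_succ]
    simp only [coefA, poch, Finset.range_zero, Finset.prod_empty, div_one, mul_pow, s4]
    have := Real.pi_ne_zero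
    field_simp
    norm_num
  | succ k ih =>
    have hp : ∀ x : ℝ, poch x (k + 1) = poch x k * (x + k) := fun x =>
      Finset.prod_range_succ _ _
    have a1 := hodd k 3 (by norm_num)
    have a2 := hodd k 1 (by norm_num)
    have a3 : 2 * (k : ℝ) + 1 ≠ 0 := by positivity
    have a4 : (k : ℝ) + 1 ≠ 0 := by positivity
    have a5 : (k : ℝ) + 2 ≠ 0 := by positivity
    have b1 : poch 1 k ≠ 0 := (Finset.prod_pos fun i _ => by positivity).ne'
    have b2 : poch 2 k ≠ 0 := (Finset.prod_pos fun i _ => by positivity).ne'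
    push_cast at a1 a2
    rw [wzK_succ (k + 1) 0 (by omega), ← mul_assoc, ← ih, hp, hp, hp]
    have c1 : (1 : ℝ) + k ≠ 0 := by positivity
    have c2 : (2 : ℝ) + k ≠ 0 := by positivity
    have d1 : 2 * ((k + 1 : ℕ) : ℝ) - 3 = 2 * k - 1 := by push_cast; ring
    have d2 : 2 * ((k + 1 : ℕ) : ℝ) - 1 = 2 * k + 1 := by push_cast; ring
    have d3 : 2 * ((k + 1 : ℕ) : ℝ) + ((0 : ℕ) : ℝ) - 1 = 2 * k + 1 := by push_cast; ring
    have d4 : 2 * ((k + 1 : ℕ) : ℝ) + ((0 : ℕ) : ℝ) = 2 * (k + 1) := by push_cast; ring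
    have d5 : ((k + 1 : ℕ) : ℝ) + ((0 : ℕ) : ℝ) - 5 / 2 = (2 * k - 3) / 2 := by push_cast; ring
    have d6 : ((k + 1 : ℕ) : ℝ) + 1 = k + 2 := by push_cast; ring
    have d7 : 2 * ((k + 1 : ℕ) : ℝ) + 1 = 2 * k + 3 := by push_cast; ring
    rw [d1, d2, d3, d4, d5, d6, d7, pow_succ (-1 / 1024 : ℝ), add_comm 1 (k : ℝ),
      add_comm 2 (k : ℝ), show (3 / 2 : ℝ) + k = (2 * k + 3) / 2 by ring]
    field_simp
    ring

end

theorem series_double2 :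
    HasSum
      (fun k : ℕ =>
        (-1/1024 : ℝ) ^ k * (poch (3/2) k) ^ 5 / ((poch 1 k) ^ 4 * poch 2 k) *
          ((13120 * (k : ℝ) ^ 6 - 2368 * (k : ℝ) ^ 5 - 2320 * (k : ℝ) ^ 4
            - 4320 * (k : ℝ) ^ 3 - 1620 * (k : ℝ) ^ 2 + 972 * k + 729) /
            ((2 * (k : ℝ) - 3) ^ 4 * (2 * (k : ℝ) - 1) ^ 4)))
      (-64 / Real.pi ^ 2) := by
  have h0 : wzG 0 0 = 0 := by
    -- the kernel contains `1 / Γ(-1) = 0`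
    have : Real.Gamma (2 * ((0 : ℕ) : ℝ) + ((0 : ℕ) : ℝ) - 1) = 0 := by
      simpa using Real.Gamma_neg_nat_eq_zero 1
    rw [wzG, wzK, this]
    simp
  have hs : HasSum (fun n => wzG (n + 1) 0) 2 := by
    have h := (hasSum_nat_add_iff' 1).2 (summable_wzG 0).hasSum
    simpa [h0, tsum_wzG_zero] using h
  have := hs.mul_left (-32 / Real.pi ^ 2)
  rw [show -32 / Real.pi ^ 2 * 2 = -64 / Real.pi ^ 2 by ring] at this
  refine (congrArg (fun f : ℕ → ℝ => HasSum f (-64 / Real.pi ^ 2)) (funext fun k => ?_)).mpr this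
  have e := wzK_target k
  rw [div_eq_mul_inv _ ((2 * (k : ℝ) - 3) ^ 4 * (2 * (k : ℝ) - 1) ^ 4)] at e
  rw [div_eq_mul_inv _ ((2 * (k : ℝ) - 3) ^ 4 * (2 * (k : ℝ) - 1) ^ 4), mul_left_comm, e, wzG, cert]
  push_cast
  ring
end

section
/- The series Σ_{k=0}^∞ (−1/1024)^k · ((1/2)_k)^5 · ((1)_k)^3 / (((5/4)_k)^4 · ((7/4)_k)^4) · (1640k⁶ + 5936k⁵ + 8738k⁴ + 6664k³ + 2762k² + 587k + 50) converges and equals 81π²/16. -/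
open Filter Topology

namespace SeriesPiSq

lemma poch_succ (x : ℝ) (k : ℕ) : poch x (k + 1) = poch x k * (x + k) := by
  simp [poch, Finset.prod_range_succ]

lemma poch_zero (x : ℝ) : poch x 0 = 1 := by simp [poch]

lemma poch_pos {x : ℝ} (hx : 0 < x) (k : ℕ) : 0 < poch x k :=
  Finset.prod_pos fun i _ => by positivity

lemma poch_mono {x y : ℝ} (hx : 0 < x) (hxy : x ≤ y) (k : ℕ) : poch x k ≤ poch y k :=
  Finset.prod_le_prod (fun i _ => by positivity) fun i _ => by linarith

/-! ### The Wilf–Zeilberger pair -/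

/-- The ratio `(1)_{n+k} / (3/2)_{2n+k}`, whose fourth power is the hypergeometric kernel. -/
noncomputable def h (n k : ℕ) : ℝ := poch 1 (n + k) / poch (3/2) (2 * n + k)

/-- The prefactor `(-1/4)^n (1/2)_n^5 / (1)_n`. -/
noncomputable def c (n : ℕ) : ℝ := (-1/4) ^ n * poch (1/2) n ^ 5 / poch 1 n

/-- The polynomial part of the Wilf–Zeilberger certificate. -/
noncomputable def P (n k : ℝ) : ℝ :=
  (50 + 587 * n + 2762 * n^2 + 6664 * n^3 + 8738 * n^4 + 5936 * n^5 + 1640 * n^6)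
  + (256 + 2452 * n + 9016 * n^2 + 15976 * n^3 + 13720 * n^4 + 4592 * n^5) * k
  + (540 + 4032 * n + 10860 * n^2 + 12576 * n^3 + 5312 * n^4) * k^2
  + (600 + 3272 * n + 5744 * n^2 + 3264 * n^3) * k^3
  + (370 + 1312 * n + 1128 * n^2) * k^4 + (120 + 208 * n) * k^5 + 16 * k^6

/-- The first member of the Wilf–Zeilberger pair; it vanishes at `n = 0`. -/
noncomputable def F (n k : ℕ) : ℝ := -32 * n * c n * (3 * n + 3/2 + 2 * k) * h n k ^ 4

/-- The second member of the Wilf–Zeilberger pair. -/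
noncomputable def G (n k : ℕ) : ℝ := c n * h n k ^ 4 * P n k / (2 * n + k + 3/2) ^ 4

lemma h_pos (n k : ℕ) : 0 < h n k := div_pos (poch_pos one_pos _) (poch_pos (by norm_num) _)

lemma h_succ_right (n k : ℕ) : h n (k + 1) = h n k * ((n + k + 1) / (2 * n + k + 3/2)) := by
  have := (poch_pos (x := 3/2) (by norm_num) (2 * n + k)).ne'
  have h2 : (2 * n + k + 3/2 : ℝ) ≠ 0 := by positivity
  have h3 : (3/2 + (2 * n + k) : ℝ) ≠ 0 := by positivity
  simp only [h, ← add_assoc, poch_succ]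
  push_cast
  field_simp
  ring

lemma h_succ_left (n k : ℕ) :
    h (n + 1) k = h n k * ((n + k + 1) / ((2 * n + k + 3/2) * (2 * n + k + 5/2))) := by
  have := (poch_pos (x := 3/2) (by norm_num) (2 * n + k)).ne'
  have h2 : (2 * n + k + 3/2 : ℝ) ≠ 0 := by positivity
  have h3 : (3/2 + (2 * n + k) : ℝ) ≠ 0 := by positivity
  have h4 : (2 * n + k + 5/2 : ℝ) ≠ 0 := by positivity
  have h5 : (3/2 + (2 * n + k + 1) : ℝ) ≠ 0 := by positivity
  have e1 : n + 1 + k = (n + k) + 1 := by ring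
  have e2 : 2 * (n + 1) + k = (2 * n + k) + 1 + 1 := by ring
  simp only [h, e1, e2, poch_succ]
  push_cast
  field_simp
  ring

lemma c_succ (n : ℕ) : c (n + 1) * (n + 1) = c n * (-1/4 * (n + 1/2) ^ 5) := by
  have := (poch_pos (x := 1) one_pos n).ne'
  have h2 : (1 + n : ℝ) ≠ 0 := by positivity
  simp only [c, poch_succ]
  field_simp
  ring

lemma wz (n k : ℕ) : F n k - F (n + 1) k = G n (k + 1) - G n k := by
  have e : F (n + 1) k = 8 * c n * (n + 1/2) ^ 5 * (3 * n + 9/2 + 2 * k) * h (n + 1) k ^ 4 := by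
    have := c_succ n
    simp only [F]
    push_cast
    linear_combination (-32 * (3 * n + 9/2 + 2 * k) * h (n + 1) k ^ 4) * this
  have h2 : (2 * n + k + 3/2 : ℝ) ≠ 0 := by positivity
  have h4 : (2 * n + k + 5/2 : ℝ) ≠ 0 := by positivity
  have e3 : (2 * n + (k + 1) + 3/2 : ℝ) = 2 * n + k + 5/2 := by ring
  rw [e, h_succ_left]
  simp only [F, G, h_succ_right, P]
  push_cast
  rw [e3]
  field_simp
  ring

lemma F_zero (k : ℕ) : F 0 k = 0 := by simp [F]

/-- The pair summed over the rectangle `n < N`, `k < K`. -/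
lemma sum_G (N K : ℕ) :
    ∑ n ∈ Finset.range N, G n 0
      = ∑ n ∈ Finset.range N, G n K + ∑ k ∈ Finset.range K, F N k := by
  have h1 : ∀ n, G n K - G n 0 = ∑ k ∈ Finset.range K, F n k - ∑ k ∈ Finset.range K, F (n + 1) k := by
    intro n
    rw [← Finset.sum_sub_distrib, ← Finset.sum_range_sub (G n)]
    exact Finset.sum_congr rfl fun k _ => (wz n k).symm
  have h2 := Finset.sum_range_sub' (fun n => ∑ k ∈ Finset.range K, F n k) N
  simp only [← h1, Finset.sum_sub_distrib, F_zero, Finset.sum_const_zero] at h2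
  linarith

/-! ### Estimates -/

/-- Decay of the kernel in `k`, uniform in `n ≥ 1`: each factor
`((n+k+1)/(2n+k+3/2))^4` is at most `((k+2)/(k+3))^3`. -/
lemma h_bound {n : ℕ} (hn : 1 ≤ n) (k : ℕ) : h n k ^ 4 ≤ h n 0 ^ 4 * (2 / (k + 2)) ^ 3 := by
  have hn' : (1 : ℝ) ≤ n := by exact_mod_cast hn
  induction k with
  | zero => simp
  | succ k ih =>
    have hk : (0 : ℝ) ≤ k := k.cast_nonneg
    have h1 : ((n + k + 1) / (2 * n + k + 3/2) : ℝ) ≤ (k + 2) / (k + 7/2) := by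
      rw [div_le_div_iff₀ (by positivity) (by positivity)]
      nlinarith
    have h2 : ((k + 2) / (k + 7/2) : ℝ) ^ 4 ≤ ((k + 2) / (k + 3)) ^ 3 := by
      rw [div_pow, div_pow, div_le_div_iff₀ (by positivity) (by positivity), ← sub_nonneg]
      have : ((k + 2 : ℝ) ^ 3 * (k + 7/2) ^ 4 - (k + 2) ^ 4 * (k + 3) ^ 3)
        = (k + 2) ^ 3 * ((k + 7/2) ^ 4 - (k + 2) * (k + 3) ^ 3) := by ring
      rw [this]
      have : 0 ≤ ((k + 7/2 : ℝ) ^ 4 - (k + 2) * (k + 3) ^ 3) := by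
        ring_nf
        positivity
      positivity
    have h3 : ((n + k + 1) / (2 * n + k + 3/2) : ℝ) ^ 4 ≤ ((k + 2) / (k + 3)) ^ 3 :=
      (pow_le_pow_left₀ (by positivity) h1 4).trans h2
    rw [h_succ_right, mul_pow]
    calc _ ≤ h n 0 ^ 4 * (2 / (k + 2)) ^ 3 * ((k + 2) / (k + 3)) ^ 3 := by gcongr
      _ = _ := by
        push_cast
        field_simp
        ring

lemma P_bound {n k : ℝ} (hn : 0 ≤ n) (hk : 0 ≤ k) :
    0 ≤ P n k ∧ P n k ≤ 1000 * (2 * n + k + 3/2) ^ 6 := by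
  constructor
  · simp only [P]
    positivity
  · rw [← sub_nonneg]
    simp only [P]
    ring_nf
    positivity

/-- Duplication: both sides equal `(3/2)_{2n+1}`, whose factors split by parity of the index. -/
lemma poch_dup (n : ℕ) :
    poch (3/2) (2 * n) * (2 * n + 3/2) = 3/2 * 4 ^ n * poch (5/4) n * poch (7/4) n := by
  induction n with
  | zero => simp [poch_zero]
  | succ n ih =>
    have e : 2 * (n + 1) = 2 * n + 1 + 1 := by ring
    rw [e, poch_succ, poch_succ, poch_succ, poch_succ]
    push_cast
    linear_combination ((3/2 + (2 * n + 1)) * (2 * (n + 1) + 3/2)) * ih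

/-- The hypergeometric part of the `n`-th term, without the polynomial factor. -/
noncomputable def t (n : ℕ) : ℝ :=
  (-1/1024 : ℝ) ^ n * poch (1/2) n ^ 5 * poch 1 n ^ 3 / (poch (5/4) n ^ 4 * poch (7/4) n ^ 4)

lemma t_eq (n : ℕ) : t n = 81/16 * (c n * h n 0 ^ 4 / (2 * n + 3/2) ^ 4) := by
  have a1 := (poch_pos (x := 1) one_pos n).ne'
  have a2 := (poch_pos (x := 5/4) (by norm_num) n).ne'
  have a3 := (poch_pos (x := 7/4) (by norm_num) n).ne'
  have a4 := (poch_pos (x := 3/2) (by norm_num) (2 * n)).ne'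
  have a5 : (2 * n + 3/2 : ℝ) ≠ 0 := by positivity
  have e : h n 0 ^ 4 / (2 * n + 3/2 : ℝ) ^ 4
      = poch 1 n ^ 4 / (3/2 * 4 ^ n * poch (5/4) n * poch (7/4) n) ^ 4 := by
    rw [← poch_dup, h, add_zero, add_zero, div_pow, div_div, mul_pow]
  have e2 : (-1/1024 : ℝ) ^ n = (-1/4) ^ n / (4 ^ n) ^ 4 := by
    rw [← pow_mul, mul_comm n 4, pow_mul, ← div_pow]
    norm_num
  rw [mul_div_assoc, e, t, e2, c]
  field_simp
  ring

/-- The numerator and the denominator of `t n` both have eight Pochhammer factors, which are compared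
one by one. -/
lemma abs_t_le (n : ℕ) : |t n| ≤ (1/1024) ^ n := by
  have a0 := poch_pos (x := 1/2) (by norm_num) n
  have a1 := poch_pos (x := 1) one_pos n
  have a2 := poch_pos (x := 5/4) (by norm_num) n
  have a3 := poch_pos (x := 7/4) (by norm_num) n
  have b1 := poch_mono (x := 1/2) (y := 5/4) (by norm_num) (by norm_num) n
  have b2 := poch_mono (x := 1/2) (y := 7/4) (by norm_num) (by norm_num) n
  have b3 := poch_mono (x := 1) (y := 7/4) (by norm_num) (by norm_num) n
  rw [t, abs_div, abs_mul, abs_mul, abs_pow, abs_of_pos (pow_pos a0 5), abs_of_pos (pow_pos a1 3),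
    abs_of_pos (show 0 < poch (5/4) n ^ 4 * poch (7/4) n ^ 4 by positivity),
    div_le_iff₀ (by positivity)]
  have : |(-1/1024 : ℝ)| = 1/1024 := by norm_num [abs_of_neg]
  rw [this, mul_assoc]
  refine mul_le_mul_of_nonneg_left ?_ (by positivity)
  calc poch (1/2) n ^ 5 * poch 1 n ^ 3 = poch (1/2) n ^ 4 * (poch (1/2) n * poch 1 n ^ 3) := by ring
    _ ≤ poch (5/4) n ^ 4 * (poch (7/4) n * poch (7/4) n ^ 3) := by gcongr
    _ = _ := by ring

lemma summable_majorant : Summable fun n : ℕ => ((n : ℝ) + 1) ^ 6 * (1/1024) ^ n := by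
  have h1 : Summable fun n : ℕ => (n : ℝ) ^ 6 * (1/1024) ^ n :=
    summable_pow_mul_geometric_of_norm_lt_one 6 (by norm_num)
  have h2 := ((summable_nat_add_iff 1).2 h1).mul_left 1024
  refine h2.congr fun n => ?_
  push_cast
  rw [pow_succ]
  ring

lemma G_zero_eq (n : ℕ) : 81/16 * G n 0 = t n * P n 0 := by
  rw [t_eq, G]
  push_cast
  rw [add_zero]
  ring

lemma summable_term : Summable fun n : ℕ => t n * P n 0 := by
  refine Summable.of_norm_bounded (summable_majorant.mul_left 64000) fun n => ?_
  have hn : (0 : ℝ) ≤ n := n.cast_nonneg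
  obtain ⟨p0, p1⟩ := P_bound hn le_rfl
  rw [Real.norm_eq_abs, abs_mul, abs_of_nonneg p0]
  calc |t n| * P n 0 ≤ (1/1024) ^ n * (1000 * (2 * n + 0 + 3/2) ^ 6) := by
        gcongr
        exact abs_t_le n
    _ ≤ (1/1024) ^ n * (1000 * (2 * n + 2) ^ 6) := by gcongr <;> linarith
    _ = _ := by ring

lemma sum_inv_sq_le (K : ℕ) :
    ∑ k ∈ Finset.range K, 1 / ((k : ℝ) + 2) ^ 2 ≤ 1 - 1 / ((K : ℝ) + 1) := by
  induction K with
  | zero => simp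
  | succ K ih =>
    rw [Finset.sum_range_succ]
    have : 1 / ((K : ℝ) + 2) ^ 2 ≤ 1 / (K + 1) - 1 / (K + 2) := by
      rw [div_sub_div _ _ (by positivity) (by positivity),
        div_le_div_iff₀ (by positivity) (by positivity)]
      nlinarith [(Nat.cast_nonneg K : (0 : ℝ) ≤ K)]
    push_cast
    have e : (K : ℝ) + 1 + 1 = K + 2 := by ring
    rw [e]
    linarith

/-- The bound is uniform in `K`: by `h_bound` the sum over `k` is dominated by `∑ 1 / (k+2)^2 ≤ 1`, and
`c N * h N 0 ^ 4` is controlled by the geometric bound on `t N`. -/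
lemma sumF_bound {N : ℕ} (hN : 1 ≤ N) (K : ℕ) :
    |∑ k ∈ Finset.range K, F N k| ≤ 16384 * ((N + 1) ^ 6 * (1/1024) ^ N) := by
  have hN0 : (0 : ℝ) ≤ N := N.cast_nonneg
  have hc : |c N| * h N 0 ^ 4 ≤ 16/81 * (2 * N + 3/2) ^ 4 * (1/1024) ^ N := by
    have h1 := abs_t_le N
    rw [t_eq, abs_mul, abs_of_pos (show (0 : ℝ) < 81/16 by norm_num), abs_div, abs_mul,
      abs_of_pos (pow_pos (h_pos N 0) 4),
      abs_of_pos (show (0 : ℝ) < (2 * N + 3/2) ^ 4 by positivity),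
      ← mul_div_assoc,
      div_le_iff₀ (by positivity)] at h1
    linarith
  have hF : ∀ k : ℕ, |F N k| ≤
      256 * N * (3 * N + 2) * (|c N| * h N 0 ^ 4) * (1 / ((k : ℝ) + 2) ^ 2) := by
    intro k
    have hk : (0 : ℝ) ≤ k := k.cast_nonneg
    have e : |F N k| = 32 * N * |c N| * (3 * N + 3/2 + 2 * k) * h N k ^ 4 := by
      rw [F, abs_mul, abs_mul, abs_mul, abs_mul, abs_of_pos (pow_pos (h_pos N k) 4),
        abs_of_nonneg hN0, abs_of_nonneg (show (0 : ℝ) ≤ 3 * N + 3/2 + 2 * k by positivity)]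
      norm_num
    have := (h_pos N 0)
    rw [e]
    calc _ ≤ 32 * N * |c N| * ((3 * N + 2) * (k + 2)) * (h N 0 ^ 4 * (2 / (k + 2)) ^ 3) := by
          gcongr
          · nlinarith
          · exact h_bound hN k
      _ = _ := by
          field_simp
          ring
  calc |∑ k ∈ Finset.range K, F N k| ≤ ∑ k ∈ Finset.range K, |F N k| :=
        Finset.abs_sum_le_sum_abs _ _
    _ ≤ ∑ k ∈ Finset.range K,
        256 * N * (3 * N + 2) * (|c N| * h N 0 ^ 4) * (1 / ((k : ℝ) + 2) ^ 2) :=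
        Finset.sum_le_sum fun k _ => hF k
    _ = 256 * N * (3 * N + 2) * (|c N| * h N 0 ^ 4) *
        ∑ k ∈ Finset.range K, (1 / ((k : ℝ) + 2) ^ 2) := by rw [Finset.mul_sum]
    _ ≤ 256 * N * (3 * N + 2) * (16/81 * (2 * N + 3/2) ^ 4 * (1/1024) ^ N) * 1 := by
        have := (h_pos N 0)
        gcongr
        refine (sum_inv_sq_le K).trans ?_
        have : (0 : ℝ) ≤ 1 / (K + 1) := by positivity
        linarith
    _ ≤ 256 * (N + 1) * (3 * (N + 1)) * (16/81 * (2 * (N + 1)) ^ 4 * (1/1024) ^ N) * 1 := by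
        gcongr <;> linarith
    _ ≤ _ := by
        have : (0 : ℝ) ≤ (N + 1) ^ 6 * (1/1024) ^ N := by positivity
        linarith

/-- For `n ≥ 1` the kernel is `O(K⁻³)` and the rational factor is `O(K²)`. -/
lemma tendsto_G_of_pos {n : ℕ} (hn : 1 ≤ n) : Tendsto (fun K => G n K) atTop (𝓝 0) := by
  have h1 : Tendsto (fun K : ℕ => (|c n| * h n 0 ^ 4 * (8000 * (2 * n + 2) ^ 2)) * (1 / ((K : ℝ) + 1)))
      atTop (𝓝 0) := by
    simpa using (tendsto_one_div_add_atTop_nhds_zero_nat (𝕜 := ℝ)).const_mul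
      (|c n| * h n 0 ^ 4 * (8000 * (2 * n + 2) ^ 2))
  refine squeeze_zero_norm (fun K => ?_) h1
  have hn0 : (0 : ℝ) ≤ n := n.cast_nonneg
  have hK : (0 : ℝ) ≤ K := K.cast_nonneg
  obtain ⟨p0, p1⟩ := P_bound hn0 hK
  have := h_pos n 0
  have := h_pos n K
  rw [Real.norm_eq_abs, G, abs_div, abs_mul, abs_mul, abs_of_nonneg p0,
    abs_of_pos (show 0 < h n K ^ 4 by positivity),
    abs_of_pos (show (0 : ℝ) < (2 * n + K + 3/2) ^ 4 by positivity)]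
  calc |c n| * h n K ^ 4 * P n K / (2 * n + K + 3/2) ^ 4
      ≤ |c n| * (h n 0 ^ 4 * (2 / (K + 2)) ^ 3) * (1000 * (2 * n + K + 3/2) ^ 6)
        / (2 * n + K + 3/2) ^ 4 := by
        gcongr
        exact h_bound hn K
    _ = |c n| * (h n 0 ^ 4 * (2 / (K + 2)) ^ 3) * (1000 * (2 * n + K + 3/2) ^ 2) := by
        field_simp
    _ ≤ |c n| * (h n 0 ^ 4 * (2 / (K + 2)) ^ 3) * (1000 * ((2 * n + 2) * (K + 2)) ^ 2) := by
        gcongr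
        nlinarith
    _ = (|c n| * h n 0 ^ 4 * (8000 * (2 * n + 2) ^ 2)) * (1 / ((K : ℝ) + 2)) := by
        field_simp
        ring
    _ ≤ _ := by
        gcongr
        norm_num

/-! ### The boundary value at infinity -/

lemma poch_one (k : ℕ) : poch 1 k = (k.factorial : ℝ) := by
  induction k with
  | zero => simp [poch_zero]
  | succ k ih =>
    rw [poch_succ, ih, Nat.factorial_succ]
    push_cast
    ring

/-- Euler's sequence for `Γ(1/2)`, rewritten with `(1/2)_{K+1} = (1/2) (3/2)_K`. -/
lemma gammaSeq_half (K : ℕ) : Real.GammaSeq (1/2) K = 2 * ((K : ℝ) ^ (1/2 : ℝ) * h 0 K) := by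
  have e : ∏ j ∈ Finset.range (K + 1), ((1/2 : ℝ) + j) = 1/2 * poch (3/2) K := by
    rw [Finset.prod_range_succ', poch, mul_comm]
    congr 1
    · simp
    · refine Finset.prod_congr rfl fun j _ => ?_
      push_cast
      ring
  rw [Real.GammaSeq, e, h, mul_zero, zero_add, poch_one]
  have := (poch_pos (x := 3/2) (by norm_num) K).ne'
  field_simp

lemma tendsto_h : Tendsto (fun K : ℕ => h 0 K ^ 4 * (K : ℝ) ^ 2) atTop (𝓝 (Real.pi ^ 2 / 16)) := by
  have h1 := ((Real.GammaSeq_tendsto_Gamma (1/2)).pow 4).div_const 16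
  rw [Real.Gamma_one_half_eq] at h1
  have e : √Real.pi ^ 4 = Real.pi ^ 2 := by
    rw [show (4 : ℕ) = 2 * 2 by norm_num, pow_mul, Real.sq_sqrt Real.pi_pos.le]
  rw [e] at h1
  refine h1.congr fun K => ?_
  have e2 : ((K : ℝ) ^ (1/2 : ℝ)) ^ 4 = (K : ℝ) ^ 2 := by
    rw [← Real.sqrt_eq_rpow, show (4 : ℕ) = 2 * 2 by norm_num, pow_mul,
      Real.sq_sqrt K.cast_nonneg]
  rw [gammaSeq_half, mul_pow, mul_pow, e2]
  ring

lemma tendsto_G_zero : Tendsto (fun K => G 0 K) atTop (𝓝 (Real.pi ^ 2)) := by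
  have hi : Tendsto (fun K : ℕ => ((K : ℝ))⁻¹) atTop (𝓝 0) := tendsto_inv_atTop_nhds_zero_nat
  -- In the variable `x = 1/K`, the rational factor is continuous at `0` with value `16`.
  have hcont : ContinuousAt (fun x : ℝ => (16 + 120 * x + 370 * x^2 + 600 * x^3 + 540 * x^4
      + 256 * x^5 + 50 * x^6) / (1 + 3/2 * x) ^ 4) 0 := by
    refine ContinuousAt.div (by fun_prop) (by fun_prop) (by norm_num)
  have h1 := tendsto_h.mul (hcont.tendsto.comp hi)
  have e : Real.pi ^ 2 / 16 * ((16 + 120 * 0 + 370 * 0^2 + 600 * 0^3 + 540 * 0^4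
      + 256 * 0^5 + 50 * 0^6) / (1 + 3/2 * 0) ^ 4) = Real.pi ^ 2 := by
    norm_num
  rw [e] at h1
  refine h1.congr' ?_
  filter_upwards [eventually_gt_atTop 0] with K hK
  have hK0 : (K : ℝ) ≠ 0 := by positivity
  have hK1 : ((K : ℝ) + 3/2) ≠ 0 := by positivity
  have e1 : (1 + 3/2 * (K : ℝ)⁻¹) = (K + 3/2) / K := by
    field_simp
  have e2 : (16 + 120 * (K : ℝ)⁻¹ + 370 * (K : ℝ)⁻¹^2 + 600 * (K : ℝ)⁻¹^3 + 540 * (K : ℝ)⁻¹^4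
      + 256 * (K : ℝ)⁻¹^5 + 50 * (K : ℝ)⁻¹^6) = P 0 K / K ^ 6 := by
    simp only [P]
    field_simp
    ring
  have e3 : c 0 = 1 := by simp [c, poch_zero]
  simp only [Function.comp, G]
  rw [e1, e2, e3]
  push_cast
  rw [mul_zero, zero_add, one_mul]
  field_simp

/-! ### Summation -/

lemma tendsto_sum_G {N : ℕ} (hN : 1 ≤ N) :
    Tendsto (fun K => ∑ n ∈ Finset.range N, G n K) atTop (𝓝 (Real.pi ^ 2)) := by
  obtain ⟨M, rfl⟩ := Nat.exists_eq_add_of_le' hN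
  simp only [Finset.sum_range_succ']
  have h1 : Tendsto (fun K => ∑ n ∈ Finset.range M, G (n + 1) K) atTop
      (𝓝 (∑ n ∈ Finset.range M, (0 : ℝ))) :=
    tendsto_finsetSum _ fun n _ => tendsto_G_of_pos (Nat.le_add_left 1 n)
  simpa using h1.add tendsto_G_zero

lemma partial_sum_bound {N : ℕ} (hN : 1 ≤ N) :
    |∑ n ∈ Finset.range N, G n 0 - Real.pi ^ 2| ≤ 16384 * ((N + 1) ^ 6 * (1/1024) ^ N) := by
  refine le_of_tendsto ((tendsto_sum_G hN).const_sub _).abs (Eventually.of_forall fun K => ?_)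
  rw [sum_G N K, add_sub_cancel_left]
  exact sumF_bound hN K

lemma tendsto_partial_sum :
    Tendsto (fun N => ∑ n ∈ Finset.range N, G n 0) atTop (𝓝 (Real.pi ^ 2)) := by
  rw [tendsto_iff_norm_sub_tendsto_zero]
  have h1 := summable_majorant.tendsto_atTop_zero.const_mul 16384
  rw [mul_zero] at h1
  refine squeeze_zero' (Eventually.of_forall fun _ => norm_nonneg _) ?_ h1
  filter_upwards [eventually_ge_atTop 1] with N hN
  exact partial_sum_bound hN

lemma hasSum_term : HasSum (fun n : ℕ => t n * P n 0) (81 * Real.pi ^ 2 / 16) := by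
  rw [summable_term.hasSum_iff_tendsto_nat]
  have h1 := tendsto_partial_sum.const_mul (81/16)
  simp only [Finset.mul_sum, G_zero_eq] at h1
  convert h1 using 2
  ring

end SeriesPiSq

theorem series_pi_sq :
    HasSum
      (fun k : ℕ =>
        (-1/1024 : ℝ) ^ k * (poch (1/2) k) ^ 5 * (poch 1 k) ^ 3 /
          ((poch (5/4) k) ^ 4 * (poch (7/4) k) ^ 4) *
          (1640 * (k : ℝ) ^ 6 + 5936 * (k : ℝ) ^ 5 + 8738 * (k : ℝ) ^ 4
            + 6664 * (k : ℝ) ^ 3 + 2762 * (k : ℝ) ^ 2 + 587 * k + 50))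
      (81 * Real.pi ^ 2 / 16) := by
  convert SeriesPiSq.hasSum_term using 2 with k
  simp only [SeriesPiSq.t, SeriesPiSq.P]
  ring
end

section
/- The series Σ_{k=0}^∞ (−1/4)^k · ((1/2)_k)^5 / ((1)_k)^5 · (20k² + 8k + 1) converges and equals 8/π². -/
open Filter Topology

namespace GuilleraWZ

/-- The normalised Pochhammer symbol `(1/2)_n / n!`. -/
noncomputable def w (n : ℕ) : ℝ := poch (1/2) n / poch 1 n

/-- The hypergeometric factor common to the WZ pair `T`, `G`. -/
noncomputable def b (n k : ℕ) : ℝ :=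
  (-1/4) ^ n * w n ^ 5 * w k ^ 4 / ((n + k).choose n : ℝ) ^ 4

/-- The polynomial weight in `T`; at `k = 0` it is `20 n² + 8 n + 1`. -/
noncomputable def p (n k : ℕ) : ℝ :=
  20 * (n : ℝ) ^ 2 + 8 * n + 1 + 24 * k * n + 8 * (k : ℝ) ^ 2 + 4 * k

/-- First member of the WZ pair, extending the summand of the series from `k = 0` to all `k`. -/
noncomputable def T (n k : ℕ) : ℝ := b n k * p n k

/-- Second member of the WZ pair. -/
noncomputable def G (n k : ℕ) : ℝ := b n k * (8 * n * (2 * n + 4 * k + 1))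

lemma w_zero : w 0 = 1 := by simp [w, poch]

lemma w_succ (n : ℕ) : w (n + 1) = w n * ((n + 1 / 2) / (n + 1)) := by
  simp only [w, poch, Finset.prod_range_succ]
  rw [mul_div_mul_comm, add_comm (1 / 2 : ℝ) n, add_comm (1 : ℝ) n]

lemma w_nonneg (n : ℕ) : 0 ≤ w n := by
  induction n with
  | zero => simp [w_zero]
  | succ n ih => rw [w_succ]; positivity

lemma w_le_one (n : ℕ) : w n ≤ 1 := by
  induction n with
  | zero => simp [w_zero]
  | succ n ih =>
    rw [w_succ]
    refine mul_le_one₀ ih (by positivity) ?_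
    rw [div_le_one (by positivity)]
    linarith

lemma choose_pos (n k : ℕ) : (0 : ℝ) < ((n + k).choose n : ℝ) := by
  exact_mod_cast Nat.choose_pos (Nat.le_add_right n k)

lemma b_succ_left (n k : ℕ) :
    b (n + 1) k = b n k * (-(1 / 4) * (n + 1 / 2) ^ 5 / ((n + 1) * (n + k + 1) ^ 4)) := by
  have h : ((n + 1 + k).choose (n + 1) : ℝ) = (n + k + 1) * ((n + k).choose n : ℝ) / (n + 1) := by
    rw [eq_div_iff (by positivity)]
    have := Nat.add_one_mul_choose_eq (n + k) n
    rw [show n + 1 + k = n + k + 1 by ring]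
    exact_mod_cast this.symm
  have hc := choose_pos n k
  simp only [b, w_succ, h, pow_succ (-1 / 4 : ℝ) n]
  field_simp

lemma b_succ_right (n k : ℕ) :
    b n (k + 1) = b n k * ((k + 1 / 2) ^ 4 / (n + k + 1) ^ 4) := by
  have h : ((n + (k + 1)).choose n : ℝ) = (n + k + 1) * ((n + k).choose n : ℝ) / (k + 1) := by
    rw [eq_div_iff (by positivity)]
    have := Nat.add_one_mul_choose_eq (n + k) k
    rw [← Nat.choose_symm_add, show n + k + 1 = n + (k + 1) by ring, ← Nat.choose_symm_add] at this
    push_cast [← Nat.cast_inj (R := ℝ)] at this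
    linarith
  have hc := choose_pos n k
  simp only [b, w_succ, h]
  field_simp

/-- The WZ equation, a polynomial identity after division by `b n k`. -/
lemma T_sub_T (n k : ℕ) : T n (k + 1) - T n k = G (n + 1) k - G n k := by
  simp only [T, G, p, b_succ_left, b_succ_right]
  push_cast
  field_simp
  ring

lemma p_nonneg (n k : ℕ) : 0 ≤ p n k := by unfold p; positivity

lemma p_le (n k : ℕ) : p n k ≤ 20 * (n + 1 : ℝ) ^ 2 * (k + 1) ^ 2 := by
  have hn : (0 : ℝ) ≤ n := n.cast_nonneg
  have hk : (0 : ℝ) ≤ k := k.cast_nonneg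
  have h : 20 * (n + 1 : ℝ) ^ 2 * (k + 1) ^ 2 - p n k =
      32 * n + 19 + 56 * (n * k) + 12 * k ^ 2 + 36 * k + 20 * n ^ 2 * k ^ 2 + 40 * n ^ 2 * k
        + 40 * (n * k ^ 2) := by
    unfold p; ring
  have : 0 ≤ 20 * (n + 1 : ℝ) ^ 2 * (k + 1) ^ 2 - p n k := by rw [h]; positivity
  linarith

lemma abs_b_le (n k : ℕ) {c : ℝ} (hc : 0 < c) (h : c ≤ ((n + k).choose n : ℝ)) :
    |b n k| ≤ (1 / 4) ^ n / c ^ 4 := by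
  have hw : w n ^ 5 * w k ^ 4 ≤ 1 :=
    mul_le_one₀ (pow_le_one₀ (w_nonneg _) (w_le_one _)) (pow_nonneg (w_nonneg _) _)
      (pow_le_one₀ (w_nonneg _) (w_le_one _))
  have hw0 : 0 ≤ w n ^ 5 * w k ^ 4 :=
    mul_nonneg (pow_nonneg (w_nonneg _) _) (pow_nonneg (w_nonneg _) _)
  have e : |b n k| = (1 / 4) ^ n * (w n ^ 5 * w k ^ 4) / ((n + k).choose n : ℝ) ^ 4 := by
    rw [b, abs_div, mul_assoc, abs_mul, abs_pow, abs_of_nonneg hw0,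
      abs_of_nonneg (by positivity : (0 : ℝ) ≤ ((n + k).choose n : ℝ) ^ 4)]
    norm_num [abs_div]
  rw [e]
  exact div_le_div₀ (by positivity) (mul_le_of_le_one_right (by positivity) hw) (by positivity)
    (pow_le_pow_left₀ hc.le h 4)

lemma abs_b_le' (n k : ℕ) : |b n k| ≤ (1 / 4) ^ n := by
  have := abs_b_le n k one_pos (by exact_mod_cast Nat.choose_pos (Nat.le_add_right n k))
  simpa using this

lemma summable_majorant : Summable fun n : ℕ => (1 / 4 : ℝ) ^ n * (n + 1) ^ 2 := by
  have h (j : ℕ) : Summable fun n : ℕ => (n : ℝ) ^ j * (1 / 4 : ℝ) ^ n :=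
    summable_pow_mul_geometric_of_norm_lt_one j (by norm_num)
  refine (((h 2).add ((h 1).mul_left 2)).add (h 0)).congr fun n => ?_
  ring

lemma summable_T (k : ℕ) : Summable fun n => T n k := by
  refine Summable.of_norm_bounded (summable_majorant.mul_left (20 * (k + 1 : ℝ) ^ 2)) fun n => ?_
  rw [Real.norm_eq_abs, T, abs_mul, abs_of_nonneg (p_nonneg n k)]
  calc |b n k| * p n k ≤ (1 / 4) ^ n * (20 * (n + 1 : ℝ) ^ 2 * (k + 1) ^ 2) :=
        mul_le_mul (abs_b_le' n k) (p_le n k) (p_nonneg n k) (by positivity)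
    _ = _ := by ring

lemma tendsto_G (k : ℕ) : Tendsto (fun n => G n k) atTop (𝓝 0) := by
  have h := (summable_majorant.mul_left (20 * (k + 1 : ℝ) ^ 2)).tendsto_atTop_zero
  have h2 : Tendsto (fun n : ℕ => 8 / 5 * (20 * (k + 1 : ℝ) ^ 2 * ((1 / 4 : ℝ) ^ n * (n + 1) ^ 2)))
      atTop (𝓝 0) := by simpa using h.const_mul (8 / 5)
  refine squeeze_zero_norm (fun n => ?_) h2
  have hn : (0 : ℝ) ≤ n := n.cast_nonneg
  have hk : (0 : ℝ) ≤ k := k.cast_nonneg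
  have hq : 8 * (n : ℝ) * (2 * n + 4 * k + 1) ≤ 32 * ((n + 1 : ℝ) ^ 2 * (k + 1) ^ 2) := by
    have : 0 ≤ 32 * ((n + 1 : ℝ) ^ 2 * (k + 1) ^ 2) - 8 * (n : ℝ) * (2 * n + 4 * k + 1) := by
      ring_nf; positivity
    linarith
  rw [Real.norm_eq_abs, G, abs_mul, abs_of_nonneg (by positivity :
    0 ≤ 8 * (n : ℝ) * (2 * n + 4 * k + 1))]
  calc |b n k| * (8 * (n : ℝ) * (2 * n + 4 * k + 1))
      ≤ (1 / 4) ^ n * (32 * ((n + 1 : ℝ) ^ 2 * (k + 1) ^ 2)) :=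
        mul_le_mul (abs_b_le' n k) hq (by positivity) (by positivity)
    _ = _ := by ring

lemma tsum_T_succ (k : ℕ) : ∑' n, T n (k + 1) = ∑' n, T n k := by
  have h1 := ((summable_T (k + 1)).hasSum.sub (summable_T k).hasSum).tendsto_sum_nat
  have h2 : Tendsto (fun N => ∑ n ∈ Finset.range N, (T n (k + 1) - T n k)) atTop (𝓝 0) := by
    refine (tendsto_G k).congr fun N => ?_
    rw [Finset.sum_congr rfl fun n _ => T_sub_T n k, Finset.sum_range_sub fun n => G n k]
    simp [G]
  exact sub_eq_zero.1 (tendsto_nhds_unique h1 h2)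

lemma tsum_T (k : ℕ) : ∑' n, T n k = ∑' n, T n 0 := by
  induction k with
  | zero => rfl
  | succ k ih => rw [tsum_T_succ, ih]

/-- For `n ≥ 1` the denominator `binom (n+k) n ^ 4 ≥ (k+1) ^ 4` beats the weight `p`, which is
only quadratic in `k`. -/
lemma abs_T_succ_le (n k : ℕ) :
    |T (n + 1) k| ≤ 20 / (k + 1 : ℝ) ^ 2 * ((1 / 4) ^ (n + 1) * ((n + 1 : ℕ) + 1 : ℝ) ^ 2) := by
  have hc : ((k : ℝ) + 1) ≤ ((n + 1 + k).choose (n + 1) : ℝ) := by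
    rw [Nat.choose_symm_add]
    have : (k + 1).choose k ≤ (n + 1 + k).choose k := Nat.choose_le_choose k (by omega)
    rw [Nat.choose_succ_self_right] at this
    exact_mod_cast this
  rw [T, abs_mul, abs_of_nonneg (p_nonneg _ k)]
  calc |b (n + 1) k| * p (n + 1) k
      ≤ ((1 / 4) ^ (n + 1) / (k + 1 : ℝ) ^ 4) *
          (20 * ((n + 1 : ℕ) + 1 : ℝ) ^ 2 * (k + 1) ^ 2) :=
        mul_le_mul (abs_b_le _ k (by positivity) hc) (p_le _ k) (p_nonneg _ k) (by positivity)
    _ = _ := by field_simp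

/-- The terms with `n ≥ 1` are negligible as `k → ∞`. -/
lemma tendsto_tail : Tendsto (fun k => ∑' n, T (n + 1) k) atTop (𝓝 0) := by
  have hs := (summable_nat_add_iff 1).2 summable_majorant
  have h0 : Tendsto (fun k : ℕ => 20 / (k + 1 : ℝ) ^ 2 *
      ∑' n : ℕ, (1 / 4 : ℝ) ^ (n + 1) * ((n + 1 : ℕ) + 1 : ℝ) ^ 2) atTop (𝓝 0) := by
    have h := (tendsto_one_div_add_atTop_nhds_zero_nat (𝕜 := ℝ)).pow 2
    have := (h.const_mul 20).mul_const
      (∑' n : ℕ, (1 / 4 : ℝ) ^ (n + 1) * ((n + 1 : ℕ) + 1 : ℝ) ^ 2)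
    simpa [div_eq_mul_inv] using this
  refine squeeze_zero_norm (fun k => ?_) h0
  exact tsum_of_norm_bounded (hs.hasSum.mul_left _) fun n => abs_T_succ_le n k

lemma w_sq_mul_W (k : ℕ) : w k ^ 2 * (2 * k + 1) * Real.Wallis.W k = 1 := by
  induction k with
  | zero => simp [w_zero, Real.Wallis.W]
  | succ k ih =>
    calc _ = w k ^ 2 * (2 * k + 1) * Real.Wallis.W k := by
          rw [Real.Wallis.W_succ, w_succ]
          push_cast
          field_simp
          ring
      _ = 1 := ih

/-- The term `n = 0` through Wallis' partial products, using
`8 k² + 4 k + 1 = 2 (2 k + 1)² - 2 (2 k + 1) + 1`. -/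
lemma T_zero (k : ℕ) : T 0 k =
    (2 - 2 * (1 / (2 * k + 1 : ℝ)) + (1 / (2 * k + 1 : ℝ)) ^ 2) / Real.Wallis.W k ^ 2 := by
  have hW := Real.Wallis.W_pos k
  have hw : w k ^ 2 = 1 / ((2 * k + 1) * Real.Wallis.W k) := by
    rw [eq_div_iff (by positivity), ← mul_assoc, w_sq_mul_W k]
  have h4 : w k ^ 4 = (1 / ((2 * k + 1) * Real.Wallis.W k)) ^ 2 := by rw [← hw]; ring
  simp only [T, b, p, w_zero, h4]
  simp
  field_simp
  ring

lemma tendsto_T_zero : Tendsto (fun k => T 0 k) atTop (𝓝 (8 / Real.pi ^ 2)) := by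
  simp only [T_zero]
  have h : Tendsto (fun k : ℕ => 1 / (2 * k + 1 : ℝ)) atTop (𝓝 0) := by
    refine squeeze_zero (fun k => by positivity) (fun k => ?_)
      (tendsto_one_div_add_atTop_nhds_zero_nat (𝕜 := ℝ))
    exact one_div_le_one_div_of_le (by positivity) (by linarith [(k.cast_nonneg : (0 : ℝ) ≤ k)])
  have := (((h.const_mul 2).const_sub 2).add (h.pow 2)).div
    (Real.Wallis.tendsto_W_nhds_pi_div_two.pow 2) (by positivity)
  have e : 8 / Real.pi ^ 2 = (2 - 2 * 0 + 0 ^ 2) / (Real.pi / 2) ^ 2 := by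
    field_simp
    ring
  rw [e]
  exact this

lemma tsum_T_zero : ∑' n, T n 0 = 8 / Real.pi ^ 2 := by
  have h := tendsto_T_zero.add tendsto_tail
  rw [add_zero] at h
  refine tendsto_nhds_unique (tendsto_const_nhds.congr fun k => ?_) h
  rw [← tsum_T k, (summable_T k).tsum_eq_zero_add]

end GuilleraWZ

theorem guillera_rate_quarter :
    HasSum
      (fun k : ℕ =>
        (-1/4 : ℝ) ^ k * (poch (1/2) k) ^ 5 / (poch 1 k) ^ 5 *
          (20 * (k : ℝ) ^ 2 + 8 * k + 1))
      (8 / Real.pi ^ 2) := by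
  have h := (GuilleraWZ.summable_T 0).hasSum
  rw [GuilleraWZ.tsum_T_zero] at h
  convert h using 2 with k
  simp only [GuilleraWZ.T, GuilleraWZ.b, GuilleraWZ.p, GuilleraWZ.w_zero]
  simp [GuilleraWZ.w, div_pow, mul_div_assoc]
end

section
/- The series Σ_{k=0}^∞ (−1/4)^k · ((1/2)_k)^5 / ((1)_k · ((2)_k)^4) · (20k² + 32k + 13) converges and equals 128/π². -/
open Filter Topology

namespace ChuZhang

lemma poch_zero (x : ℝ) : poch x 0 = 1 := by simp [poch]

lemma poch_succ (x : ℝ) (k : ℕ) : poch x (k + 1) = poch x k * (x + k) := by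
  simp [poch, Finset.prod_range_succ]

lemma poch_pos {x : ℝ} (hx : 0 < x) (k : ℕ) : 0 < poch x k :=
  Finset.prod_pos fun i _ => by positivity

/-- The hypergeometric kernel of the Wilf–Zeilberger pair `(F, G)`. -/
noncomputable def A (n k : ℕ) : ℝ :=
  (-1/4 : ℝ) ^ n * poch (1/2) n ^ 5 * poch (3/2) k ^ 4 / (poch 2 (n + k) ^ 4 * poch 1 n)

/-- The summand of the family of series; `G n 0` is the `n`-th term of the series to be summed. -/
noncomputable def G (n k : ℕ) : ℝ :=
  A n k * (20 * (n : ℝ) ^ 2 + 24 * n * k + 8 * (k : ℝ) ^ 2 + 32 * n + 20 * k + 13)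

/-- The Wilf–Zeilberger companion of `G`. -/
noncomputable def F (n k : ℕ) : ℝ := A n k * (n * (16 * n + 32 * k + 40))

lemma A_succ_left (n k : ℕ) :
    A (n + 1) k = A n k * (-(1/4) * (1/2 + n) ^ 5 / ((2 + n + k) ^ 4 * (1 + n))) := by
  have h2 := poch_pos (x := 2) (by norm_num) (n + k)
  have h1 := poch_pos (x := 1) (by norm_num) n
  have e : n + 1 + k = n + k + 1 := by ring
  unfold A
  rw [e, poch_succ, poch_succ, poch_succ]
  push_cast
  have : (2 : ℝ) + (n + k) ≠ 0 := by positivity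
  have : (2 : ℝ) + n + k ≠ 0 := by positivity
  have : (1 : ℝ) + n ≠ 0 := by positivity
  rw [show (2 : ℝ) + n + k = 2 + (n + k) by ring]
  field_simp
  ring

lemma A_succ_right (n k : ℕ) :
    A n (k + 1) = A n k * ((3/2 + k) ^ 4 / (2 + n + k) ^ 4) := by
  have h2 := poch_pos (x := 2) (by norm_num) (n + k)
  have h1 := poch_pos (x := 1) (by norm_num) n
  unfold A
  rw [← add_assoc, poch_succ, poch_succ]
  push_cast
  have : (2 : ℝ) + (n + k) ≠ 0 := by positivity
  rw [show (2 : ℝ) + n + k = 2 + (n + k) by ring]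
  field_simp

/-- The Wilf–Zeilberger equation: after division by `A n k` it is a polynomial identity. -/
lemma G_sub_G (n k : ℕ) : G n (k + 1) - G n k = F (n + 1) k - F n k := by
  unfold G F
  rw [A_succ_left, A_succ_right]
  push_cast
  have : (2 : ℝ) + n + k ≠ 0 := by positivity
  have : (1 : ℝ) + n ≠ 0 := by positivity
  field_simp
  ring

/-- The ratio `(3/2)_k / (2)_k`, which is of order `k^(-1/2)`. -/
noncomputable def u (k : ℕ) : ℝ := poch (3/2) k / poch 2 k

lemma u_pos (k : ℕ) : 0 < u k :=
  div_pos (poch_pos (by norm_num) k) (poch_pos (by norm_num) k)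

lemma u_succ (k : ℕ) : u (k + 1) = u k * ((3/2 + k) / (2 + k)) := by
  unfold u
  rw [poch_succ, poch_succ, mul_div_mul_comm]

/-- `u k ^ 2 * (k + c)` is nonincreasing in `k` for every `c ≥ 9/7`; the choice `c = 2` matches the
powers of `k + 2` in the later estimates. -/
lemma u_sq_le (k : ℕ) : u k ^ 2 * (k + 2) ≤ 2 := by
  induction k with
  | zero => simp [u, poch_zero]
  | succ k ih =>
    refine le_trans ?_ ih
    rw [u_succ, mul_pow, mul_assoc]
    refine mul_le_mul_of_nonneg_left ?_ (by positivity)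
    have h : (0 : ℝ) < (2 + k) ^ 2 := by positivity
    push_cast
    rw [div_pow, div_mul_eq_mul_div, div_le_iff₀ h]
    have : (0 : ℝ) ≤ k := k.cast_nonneg
    nlinarith

lemma u_sq_eq (k : ℕ) : u k ^ 2 * (2 * k + 3) = 4 / Real.Wallis.W (k + 1) := by
  induction k with
  | zero => norm_num [u, poch_zero, Real.Wallis.W]
  | succ k ih =>
    have hW := Real.Wallis.W_pos (k + 1)
    have h0 : (2 * k + 3 : ℝ) ≠ 0 := by positivity
    have h1 : (2 * (k + 1) + 2 : ℝ) ≠ 0 := by positivity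
    have h2 : (2 * (k + 1) + 1 : ℝ) ≠ 0 := by positivity
    have h3 : (2 * (k + 1) + 3 : ℝ) ≠ 0 := by positivity
    have h4 : (2 + k : ℝ) ≠ 0 := by positivity
    rw [Real.Wallis.W_succ, u_succ]
    have ih' : u k ^ 2 = 4 / Real.Wallis.W (k + 1) / (2 * k + 3) := by
      rw [← ih]; field_simp
    rw [mul_pow, ih']
    push_cast
    field_simp
    ring

lemma poch_half_le (n : ℕ) : poch (1/2) n ≤ poch 1 n :=
  Finset.prod_le_prod (fun i _ => by positivity) fun i _ => by gcongr; norm_num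

lemma le_poch_two_add (n k : ℕ) :
    poch 2 k * (poch (1/2) n * (n + 1)) ≤ poch 2 (n + k) := by
  induction n with
  | zero => simp [poch_zero]
  | succ n ih =>
    have e : n + 1 + k = n + k + 1 := by ring
    have h2 := poch_pos (x := 2) (by norm_num) k
    have h1 := poch_pos (x := 1/2) (by norm_num) n
    rw [e, poch_succ, poch_succ]
    refine le_trans ?_ (mul_le_mul_of_nonneg_right ih (by positivity))
    push_cast
    rw [mul_assoc (poch 2 k), mul_assoc, mul_assoc]
    refine mul_le_mul_of_nonneg_left (mul_le_mul_of_nonneg_left ?_ h1.le) h2.le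
    have : (0 : ℝ) ≤ k := k.cast_nonneg
    have : (0 : ℝ) ≤ n := n.cast_nonneg
    nlinarith [mul_nonneg (n.cast_nonneg (α := ℝ)) (k.cast_nonneg (α := ℝ))]

/-- The factor `(n + 1)^4 (k + 2)^2` absorbs the quadratic polynomial in `G`, so this gives a bound
on `G n k` that is uniform in `k`. -/
lemma abs_A_le (n k : ℕ) :
    |A n k| * ((n + 1 : ℝ) ^ 4 * (k + 2) ^ 2) ≤ 4 * (1/4) ^ n := by
  have h2 := poch_pos (x := 2) (by norm_num) k
  have h2' := poch_pos (x := 2) (by norm_num) (n + k)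
  have h1 := poch_pos (x := 1) (by norm_num) n
  have hh := poch_pos (x := 1/2) (by norm_num) n
  have h3 := poch_pos (x := 3/2) (by norm_num) k
  have habs : |A n k| =
      (1/4 : ℝ) ^ n * poch (1/2) n ^ 5 * poch (3/2) k ^ 4 / (poch 2 (n + k) ^ 4 * poch 1 n) := by
    unfold A
    rw [abs_div, abs_mul, abs_mul, abs_pow, abs_of_pos (pow_pos hh 5), abs_of_pos (pow_pos h3 4),
      abs_of_pos (mul_pos (pow_pos h2' 4) h1)]
    norm_num
  have hA : |A n k| ≤ (1/4 : ℝ) ^ n * poch (1/2) n ^ 5 * poch (3/2) k ^ 4 /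
      ((poch 2 k * (poch (1/2) n * (n + 1))) ^ 4 * poch (1/2) n) := by
    rw [habs]
    gcongr
    · exact le_poch_two_add n k
    · exact poch_half_le n
  have hA' : (1/4 : ℝ) ^ n * poch (1/2) n ^ 5 * poch (3/2) k ^ 4 /
      ((poch 2 k * (poch (1/2) n * (n + 1))) ^ 4 * poch (1/2) n)
      = (1/4 : ℝ) ^ n * u k ^ 4 / (n + 1) ^ 4 := by
    unfold u
    have : (n + 1 : ℝ) ≠ 0 := by positivity
    field_simp
  have hu : (u k ^ 2 * (k + 2)) ^ 2 ≤ 2 ^ 2 := by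
    have := u_sq_le k
    gcongr
  calc |A n k| * ((n + 1 : ℝ) ^ 4 * (k + 2) ^ 2)
      ≤ (1/4 : ℝ) ^ n * u k ^ 4 / (n + 1) ^ 4 * ((n + 1 : ℝ) ^ 4 * (k + 2) ^ 2) := by
        rw [hA'] at hA; gcongr
    _ = (u k ^ 2 * (k + 2)) ^ 2 * (1/4) ^ n := by
        have : (n + 1 : ℝ) ≠ 0 := by positivity
        field_simp
    _ ≤ 4 * (1/4) ^ n := by
        gcongr; linarith

lemma poly_le (n k : ℕ) :
    20 * (n : ℝ) ^ 2 + 24 * n * k + 8 * (k : ℝ) ^ 2 + 32 * n + 20 * k + 13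
      ≤ 32 * ((n + 1 : ℝ) ^ 2 * (k + 2) ^ 2) := by
  rw [← sub_nonneg]
  ring_nf
  positivity

lemma abs_G_eq (n k : ℕ) : |G n k| =
    |A n k| * (20 * (n : ℝ) ^ 2 + 24 * n * k + 8 * (k : ℝ) ^ 2 + 32 * n + 20 * k + 13) := by
  unfold G
  rw [abs_mul, abs_of_nonneg (a := _ + _) (by positivity)]

lemma abs_G_le (n k : ℕ) : |G n k| ≤ 128 * (1/4) ^ n := by
  have h := abs_A_le n k
  have hn : ((n : ℝ) + 1) ^ 2 ≤ (n + 1) ^ 4 :=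
    pow_le_pow_right₀ (by linarith [n.cast_nonneg (α := ℝ)]) (by norm_num)
  rw [abs_G_eq]
  calc _ ≤ |A n k| * (32 * ((n + 1 : ℝ) ^ 2 * (k + 2) ^ 2)) := by gcongr; exact poly_le n k
    _ ≤ |A n k| * (32 * ((n + 1 : ℝ) ^ 4 * (k + 2) ^ 2)) := by gcongr
    _ ≤ _ := by linarith

lemma summable_geom (c : ℝ) : Summable fun n : ℕ => c * (1/4 : ℝ) ^ n :=
  (summable_geometric_of_lt_one (by norm_num) (by norm_num)).mul_left c

lemma summable_G (k : ℕ) : Summable fun n => G n k :=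
  (summable_geom 128).of_norm_bounded fun n => abs_G_le n k

lemma tendsto_F (k : ℕ) : Tendsto (fun n => F n k) atTop (𝓝 0) := by
  refine squeeze_zero_norm (a := fun n : ℕ => 160 * (1/4 : ℝ) ^ n) (fun n => ?_)
    (summable_geom 160).tendsto_atTop_zero
  have h := abs_A_le n k
  have hp : (n * (16 * n + 32 * k + 40) : ℝ) ≤ 40 * ((n + 1 : ℝ) ^ 4 * (k + 2) ^ 2) := by
    rw [← sub_nonneg]
    ring_nf
    positivity
  rw [Real.norm_eq_abs, F, abs_mul, abs_of_nonneg (a := (n * (16 * n + 32 * k + 40) : ℝ))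
    (by positivity)]
  calc _ ≤ |A n k| * (40 * ((n + 1 : ℝ) ^ 4 * (k + 2) ^ 2)) := by gcongr
    _ ≤ _ := by linarith

lemma tsum_G_succ (k : ℕ) : ∑' n, G n (k + 1) = ∑' n, G n k := by
  have h := ((summable_G (k + 1)).hasSum.sub (summable_G k).hasSum).tendsto_sum_nat
  have e : ∀ N, ∑ n ∈ Finset.range N, (G n (k + 1) - G n k) = F N k := by
    intro N
    simp_rw [G_sub_G]
    rw [Finset.sum_range_sub (fun n => F n k)]
    simp [F]
  simp_rw [e] at h
  exact sub_eq_zero.mp (tendsto_nhds_unique h (tendsto_F k))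

lemma tsum_G_eq (k : ℕ) : ∑' n, G n k = ∑' n, G n 0 := by
  induction k with
  | zero => rfl
  | succ k ih => rw [tsum_G_succ, ih]

lemma tendsto_G_zero : Tendsto (fun k => G 0 k) atTop (𝓝 (128 / Real.pi ^ 2)) := by
  have hW := Real.Wallis.tendsto_W_nhds_pi_div_two.comp (tendsto_add_atTop_nat 1)
  have hx : Tendsto (fun k : ℕ => 1 / (2 * k + 3 : ℝ)) atTop (𝓝 0) := by
    refine tendsto_const_nhds.div_atTop ?_
    exact tendsto_atTop_add_const_right _ _
      (tendsto_natCast_atTop_atTop.const_mul_atTop two_pos)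
  -- With `x = 1/(2k+3)` one has `8k² + 20k + 13 = (2k+3)² (2 - 2x + x²)`.
  have h := (((tendsto_const_nhds (x := (4 : ℝ))).div hW (by positivity)).pow 2).mul
    (((tendsto_const_nhds (x := (2 : ℝ))).sub (hx.const_mul 2)).add (hx.pow 2))
  have e : (4 / (Real.pi / 2)) ^ 2 * (2 - 2 * 0 + 0 ^ 2) = 128 / Real.pi ^ 2 := by
    field_simp
    norm_num
  rw [e] at h
  refine h.congr fun k => ?_
  have hk : (2 * k + 3 : ℝ) ≠ 0 := by positivity
  have h2 := poch_pos (x := 2) (by norm_num) k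
  have hA : A 0 k = (u k ^ 2) ^ 2 := by
    unfold A u
    simp only [poch_zero, zero_add]
    field_simp
  simp only [Function.comp_apply, Pi.div_apply]
  rw [← u_sq_eq, G, hA]
  push_cast
  field_simp
  ring

lemma tendsto_G_succ (n : ℕ) : Tendsto (fun k => G (n + 1) k) atTop (𝓝 0) := by
  have hx : Tendsto (fun k : ℕ => 128 * (n + 2 : ℝ) ^ 7 / (k + 2 : ℝ)) atTop (𝓝 0) := by
    refine tendsto_const_nhds.div_atTop ?_
    exact tendsto_atTop_add_const_right _ _ tendsto_natCast_atTop_atTop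
  refine squeeze_zero_norm (fun k => ?_) hx
  have hn : (0 : ℝ) ≤ n := n.cast_nonneg
  have hk : (0 : ℝ) ≤ k := k.cast_nonneg
  have h := abs_A_le n k
  have h4 : (1/4 : ℝ) ^ n ≤ 1 := pow_le_one₀ (by norm_num) (by norm_num)
  have hA : |A n k| * (k + 2) ^ 2 ≤ 4 := by
    have : |A n k| * (1 * (k + 2) ^ 2) ≤ |A n k| * ((n + 1 : ℝ) ^ 4 * (k + 2) ^ 2) := by
      gcongr
      exact one_le_pow₀ (by linarith)
    linarith
  have hr : |A (n + 1) k| ≤ |A n k| * ((n + 2 : ℝ) ^ 5 / (k + 2)) := by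
    have hpos : (0 : ℝ) < (2 + n + k) ^ 4 * (1 + n) := by positivity
    rw [A_succ_left, abs_mul]
    refine mul_le_mul_of_nonneg_left ?_ (abs_nonneg _)
    rw [abs_div, abs_mul, abs_of_pos hpos, abs_of_pos (a := (1/2 + n : ℝ) ^ 5) (by positivity)]
    have hden : (k + 2 : ℝ) ≤ (2 + n + k) ^ 4 * (1 + n) := by
      have h1 : (2 + n + k : ℝ) ≤ (2 + n + k) ^ 4 := le_self_pow₀ (by linarith) (by norm_num)
      nlinarith
    have hnum : |(-(1/4) : ℝ)| * (1/2 + n) ^ 5 ≤ (n + 2) ^ 5 := by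
      have h1 : (1/2 + n : ℝ) ^ 5 ≤ (n + 2) ^ 5 := by
        apply pow_le_pow_left₀ (by linarith); linarith
      have h2 : |(-(1/4) : ℝ)| = 1/4 := by norm_num [abs_of_pos]
      have h3 : (0 : ℝ) ≤ (1/2 + n) ^ 5 := by positivity
      rw [h2]; linarith
    gcongr
  have hp := poly_le (n + 1) k
  rw [Real.norm_eq_abs, abs_G_eq]
  calc _ ≤ |A (n + 1) k| * (32 * ((((n + 1 : ℕ) : ℝ) + 1) ^ 2 * (k + 2) ^ 2)) := by gcongr
    _ ≤ |A n k| * ((n + 2 : ℝ) ^ 5 / (k + 2)) *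
        (32 * ((((n + 1 : ℕ) : ℝ) + 1) ^ 2 * (k + 2) ^ 2)) := by gcongr
    _ = (|A n k| * (k + 2) ^ 2) * (32 * (n + 2 : ℝ) ^ 7 / (k + 2)) := by
        push_cast; ring
    _ ≤ 4 * (32 * (n + 2 : ℝ) ^ 7 / (k + 2)) := by gcongr
    _ = _ := by ring

lemma tsum_G_zero : ∑' n, G n 0 = 128 / Real.pi ^ 2 := by
  have h := tendsto_tsum_of_dominated_convergence (𝓕 := atTop) (f := fun k n => G n k)
    (g := fun n => if n = 0 then 128 / Real.pi ^ 2 else 0) (summable_geom 128)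
    (fun n => by
      cases n with
      | zero => simpa using tendsto_G_zero
      | succ n => simpa using tendsto_G_succ n)
    (Eventually.of_forall fun k n => abs_G_le n k)
  simp only [tsum_G_eq, tsum_ite_eq] at h
  exact tendsto_nhds_unique tendsto_const_nhds h

end ChuZhang

open ChuZhang in
theorem chu_zhang_series :
    HasSum
      (fun k : ℕ =>
        (-1/4 : ℝ) ^ k * (poch (1/2) k) ^ 5 / (poch 1 k * (poch 2 k) ^ 4) *
          (20 * (k : ℝ) ^ 2 + 32 * k + 13))
      (128 / Real.pi ^ 2) := by
  have h := (summable_G 0).hasSum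
  rw [tsum_G_zero] at h
  convert h using 2 with k
  simp only [G, A, poch_zero, add_zero]
  push_cast
  ring
end

section
/- The series Σ_{k=0}^∞ (−1/4)^k · ((1/2)_k)^5 / ((1)_k · ((3)_k)^4) · (20k² + 56k + 41) converges and equals 2^15 / (3^4 · π²). -/
open Filter Topology

lemma poch_zero (x : ℝ) : poch x 0 = 1 := by simp [poch]

lemma poch_succ (x : ℝ) (k : ℕ) : poch x (k + 1) = poch x k * (x + k) := by
  simp [poch, Finset.prod_range_succ]

lemma poch_succ_left (x : ℝ) (k : ℕ) : poch x (k + 1) = x * poch (x + 1) k := by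
  induction k with
  | zero => simp [poch]
  | succ k ih => rw [poch_succ, ih, poch_succ]; push_cast; ring

lemma poch_pos {x : ℝ} (hx : 0 < x) (k : ℕ) : 0 < poch x k :=
  Finset.prod_pos fun i _ => by positivity

lemma poch_mono {x y : ℝ} (hx : 0 < x) (h : x ≤ y) (k : ℕ) : poch x k ≤ poch y k :=
  Finset.prod_le_prod (fun i _ => by positivity) fun i _ => by linarith

lemma poch_mul_le {x : ℝ} (hx : 0 < x) (n k : ℕ) : poch x n * poch x k ≤ poch x (n + k) := by
  induction n with
  | zero => simp [poch_zero]
  | succ n ih =>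
    have h : n + 1 + k = n + k + 1 := by ring
    rw [h, poch_succ, poch_succ]
    have := poch_pos hx n
    have := poch_pos hx k
    push_cast
    calc poch x n * (x + n) * poch x k = poch x n * poch x k * (x + n) := by ring
      _ ≤ poch x (n + k) * (x + (n + k)) :=
        mul_le_mul ih (by linarith [(Nat.cast_nonneg k : (0 : ℝ) ≤ k)]) (by positivity)
          (poch_pos hx _).le

/-- The hypergeometric kernel shared by both members of the WZ pair. -/
noncomputable def wzU (n k : ℕ) : ℝ :=
  (-1/4 : ℝ) ^ n * poch (1/2) n ^ 5 * poch (5/2) k ^ 4 / (poch 1 n * poch 3 (n + k) ^ 4)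

/-- The member of the WZ pair that is summed over `n`; `wzS n 0` is the `n`-th term of the series. -/
noncomputable def wzS (n k : ℕ) : ℝ :=
  (20 * (n : ℝ) ^ 2 + 56 * n + 41 + 24 * n * k + 8 * (k : ℝ) ^ 2 + 36 * k) * wzU n k

/-- The certificate of the WZ pair. -/
noncomputable def wzT (n k : ℕ) : ℝ := 8 * n * (2 * n + 4 * k + 9) * wzU n k

lemma wz_pair (n k : ℕ) : wzT (n + 1) k - wzT n k = wzS n (k + 1) - wzS n k := by
  have h1 := (poch_pos one_pos n).ne'
  have h3 := (poch_pos (x := 3) (by norm_num) (n + k)).ne'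
  have hn : (1 + n : ℝ) ≠ 0 := by positivity
  have hnk : (3 + (n + k) : ℝ) ≠ 0 := by positivity
  have e1 : n + 1 + k = n + k + 1 := by ring
  have e2 : n + (k + 1) = n + k + 1 := by ring
  simp only [wzT, wzS, wzU, e1, e2, poch_succ, pow_succ (-1/4 : ℝ)]
  push_cast
  field_simp
  ring

/-- Bounding `(1/2)_{n+1} = (1/2) (3/2)_n` by `(3)_n` and `(5/2)_k` by `(3)_k`, the kernel gains
`(k+1)⁻⁴` from the factor `n + k + 3` of `(3)_{n+1+k}`. -/
lemma abs_wzU_succ_le (n k : ℕ) : |wzU (n + 1) k| ≤ (1/4 : ℝ) ^ n / ((k : ℝ) + 1) ^ 4 := by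
  have p1 := poch_pos one_pos (n + 1)
  have ph := poch_pos (x := 1/2) (by norm_num) (n + 1)
  have p3n := poch_pos (x := 3) (by norm_num) n
  have p3k := poch_pos (x := 3) (by norm_num) k
  have p5 := poch_pos (x := 5/2) (by norm_num) k
  have a1 : poch (1/2) (n + 1) ≤ poch 1 (n + 1) := poch_mono (by norm_num) (by norm_num) _
  have a2 : poch (1/2) (n + 1) ≤ poch 3 n := by
    rw [poch_succ_left]
    have := poch_mono (x := 1/2 + 1) (y := 3) (by norm_num) (by norm_num) n
    have := poch_pos (x := 1/2 + 1) (by norm_num) n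
    linarith
  have a3 : poch (5/2) k ≤ poch 3 k := poch_mono (by norm_num) (by norm_num) _
  have a4 : poch 3 n * poch 3 k * (k + 1) ≤ poch 3 (n + 1 + k) := by
    have e1 : n + 1 + k = n + k + 1 := by ring
    rw [e1, poch_succ]
    have := poch_mul_le (x := 3) (by norm_num) n k
    have hn := (Nat.cast_nonneg n : (0 : ℝ) ≤ n)
    push_cast
    exact mul_le_mul this (by linarith) (by positivity) (poch_pos (by norm_num) _).le
  have p3 := poch_pos (x := 3) (by norm_num) (n + 1 + k)
  rw [wzU, abs_div, abs_mul, abs_mul, abs_pow, abs_of_pos (by positivity : 0 < poch 1 (n+1) * _),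
    abs_of_pos (by positivity : 0 < poch (1/2) (n+1) ^ 5),
    abs_of_pos (by positivity : 0 < poch (5/2) k ^ 4)]
  have h4 : |(-1/4 : ℝ)| = 1/4 := by rw [abs_of_neg] <;> norm_num
  rw [h4, div_le_div_iff₀ (by positivity) (by positivity)]
  calc (1/4 : ℝ) ^ (n+1) * poch (1/2) (n+1) ^ 5 * poch (5/2) k ^ 4 * ((k : ℝ) + 1) ^ 4
      = (1/4 : ℝ) ^ (n+1) * (poch (1/2) (n+1) *
          (poch (1/2) (n+1) * poch (5/2) k * (k + 1)) ^ 4) := by ring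
    _ ≤ (1/4 : ℝ) ^ n * (poch 1 (n+1) * (poch 3 n * poch 3 k * (k + 1)) ^ 4) := by
        gcongr ?_ * (?_ * (?_ * ?_ * _) ^ 4)
        exact pow_le_pow_of_le_one (by norm_num) (by norm_num) (Nat.le_succ n)
    _ ≤ (1/4 : ℝ) ^ n * (poch 1 (n+1) * poch 3 (n + 1 + k) ^ 4) := by gcongr

/-- A summable majorant, uniform in `k`, for the terms with `n ≥ 1`. -/
noncomputable def wzB (n : ℕ) : ℝ := 200 * (((n : ℝ) + 1) ^ 2 * (1/4) ^ n)

lemma summable_wzB : Summable wzB := by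
  have h := summable_pow_mul_geometric_of_norm_lt_one (R := ℝ) 2 (r := 1/4) (by norm_num)
  have h' := ((summable_nat_add_iff 1).2 h).mul_left (800 : ℝ)
  refine h'.congr fun n => ?_
  simp only [wzB, pow_succ (1/4 : ℝ)]
  push_cast
  ring

lemma abs_wzS_succ_le (n k : ℕ) : |wzS (n + 1) k| ≤ wzB n / ((k : ℝ) + 1) ^ 2 := by
  have hn := (Nat.cast_nonneg n : (0 : ℝ) ≤ n)
  have hk := (Nat.cast_nonneg k : (0 : ℝ) ≤ k)
  rw [wzS, abs_mul, abs_of_nonneg (by positivity)]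
  calc _ ≤ (200 * ((n : ℝ) + 1) ^ 2 * ((k : ℝ) + 1) ^ 2) * ((1/4 : ℝ) ^ n / ((k : ℝ) + 1) ^ 4) := by
        refine mul_le_mul ?_ (abs_wzU_succ_le n k) (abs_nonneg _) (by positivity)
        push_cast
        rw [← sub_nonneg]
        ring_nf
        positivity
    _ = _ := by rw [wzB]; field_simp

lemma abs_wzT_succ_le (n k : ℕ) : |wzT (n + 1) k| ≤ wzB n := by
  have hn := (Nat.cast_nonneg n : (0 : ℝ) ≤ n)
  have hk := (Nat.cast_nonneg k : (0 : ℝ) ≤ k)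
  rw [wzT, abs_mul, abs_of_nonneg (by positivity)]
  calc _ ≤ (200 * ((n : ℝ) + 1) ^ 2 * ((k : ℝ) + 1) ^ 4) * ((1/4 : ℝ) ^ n / ((k : ℝ) + 1) ^ 4) := by
        refine mul_le_mul ?_ (abs_wzU_succ_le n k) (abs_nonneg _) (by positivity)
        push_cast
        rw [← sub_nonneg]
        ring_nf
        positivity
    _ = _ := by rw [wzB]; field_simp

lemma summable_wzS_succ (k : ℕ) : Summable fun n => wzS (n + 1) k :=
  Summable.of_norm_bounded (summable_wzB.div_const _) fun n => abs_wzS_succ_le n k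

lemma summable_wzS (k : ℕ) : Summable fun n => wzS n k :=
  (summable_nat_add_iff 1).1 (summable_wzS_succ k)

lemma tendsto_wzT (k : ℕ) : Tendsto (fun n => wzT n k) atTop (𝓝 0) :=
  (tendsto_add_atTop_iff_nat 1).1
    (squeeze_zero_norm (fun n => abs_wzT_succ_le n k) summable_wzB.tendsto_atTop_zero)

lemma tsum_wzS_succ (k : ℕ) : ∑' n, wzS n (k + 1) = ∑' n, wzS n k := by
  have h1 := ((summable_wzS (k + 1)).hasSum.sub (summable_wzS k).hasSum).tendsto_sum_nat
  have h2 : (fun N => ∑ n ∈ Finset.range N, (wzS n (k + 1) - wzS n k)) = fun N => wzT N k := by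
    funext N
    simp_rw [← wz_pair]
    rw [Finset.sum_range_sub (fun n => wzT n k)]
    simp [wzT]
  rw [h2] at h1
  exact sub_eq_zero.1 (tendsto_nhds_unique h1 (tendsto_wzT k))

lemma tsum_wzS (k : ℕ) : ∑' n, wzS n k = ∑' n, wzS n 0 := by
  induction k with
  | zero => rfl
  | succ k ih => rw [tsum_wzS_succ, ih]

lemma Gamma_five_halves : Real.Gamma (5/2) = 3 / 4 * √Real.pi := by
  have h1 : (5/2 : ℝ) = 1/2 + 1 + 1 := by norm_num
  rw [h1, Real.Gamma_add_one (by norm_num), Real.Gamma_add_one (by norm_num),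
    Real.Gamma_one_half_eq]
  ring

lemma Gamma_three : Real.Gamma 3 = 2 := by
  have h1 : (3 : ℝ) = 1 + 1 + 1 := by norm_num
  rw [h1, Real.Gamma_add_one (by norm_num), Real.Gamma_add_one (by norm_num), Real.Gamma_one]
  norm_num

/-- `Real.GammaSeq x m` is `m ^ x * m! / (x)_{m+1}`, so the quotient `(5/2)_{m+1} / (3)_{m+1}` is a
quotient of two such approximants, up to the factor `m ^ (-1/2)`. -/
lemma wzS_zero_succ_eq {m : ℕ} (hm : m ≠ 0) :
    wzS 0 (m + 1) = (Real.GammaSeq 3 m / Real.GammaSeq (5/2) m) ^ 4 *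
      (8 + 52 * (m : ℝ)⁻¹ + 85 * (m : ℝ)⁻¹ * (m : ℝ)⁻¹) := by
  have hm' : (0 : ℝ) < m := by positivity
  have p5 := (poch_pos (x := 5/2) (by norm_num) (m + 1)).ne'
  have p3 := (poch_pos (x := 3) (by norm_num) (m + 1)).ne'
  have hf : (m.factorial : ℝ) ≠ 0 := by positivity
  have r3 : (m : ℝ) ^ (3 : ℝ) = (m : ℝ) ^ 3 := by exact_mod_cast Real.rpow_natCast (m : ℝ) 3
  have r5 : ((m : ℝ) ^ (5/2 : ℝ)) ^ 4 = (m : ℝ) ^ 10 := by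
    rw [← Real.rpow_natCast, ← Real.rpow_mul hm'.le, ← Real.rpow_natCast]
    norm_num
  have r5' : (m : ℝ) ^ (5/2 : ℝ) ≠ 0 := by positivity
  have g3 : Real.GammaSeq 3 m = (m : ℝ) ^ 3 * m.factorial / poch 3 (m + 1) := by
    rw [Real.GammaSeq, r3, poch]
  have g5 : Real.GammaSeq (5/2) m = (m : ℝ) ^ (5/2 : ℝ) * m.factorial / poch (5/2) (m + 1) := by
    rw [Real.GammaSeq, poch]
  rw [g3, g5, div_pow, div_pow, div_pow, mul_pow, mul_pow, r5, wzS, wzU, poch_zero, poch_zero,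
    zero_add]
  push_cast
  field_simp
  ring

lemma tendsto_wzS_zero :
    Tendsto (fun k => wzS 0 k) atTop (𝓝 (2 ^ 15 / (3 ^ 4 * Real.pi ^ 2))) := by
  refine (tendsto_add_atTop_iff_nat 1).1 ?_
  have hpi := Real.pi_pos
  have hG : Real.Gamma (5/2) ≠ 0 := (Real.Gamma_pos_of_pos (by norm_num)).ne'
  have h := ((Real.GammaSeq_tendsto_Gamma 3).div (Real.GammaSeq_tendsto_Gamma (5/2)) hG).pow 4
  have hi : Tendsto (fun m : ℕ => (m : ℝ)⁻¹) atTop (𝓝 0) := tendsto_inv_atTop_nhds_zero_nat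
  have h2 := h.mul (((hi.const_mul 52).const_add 8).add ((hi.const_mul 85).mul hi))
  have hs : √Real.pi ^ 4 = Real.pi ^ 2 := by
    rw [show √Real.pi ^ 4 = (√Real.pi ^ 2) ^ 2 by ring, Real.sq_sqrt hpi.le]
  have hv : (Real.Gamma 3 / Real.Gamma (5/2)) ^ 4 * (8 + 52 * 0 + 85 * 0 * 0)
      = 2 ^ 15 / (3 ^ 4 * Real.pi ^ 2) := by
    rw [Gamma_three, Gamma_five_halves, div_pow, mul_pow, hs]
    field_simp
    norm_num
  rw [hv] at h2
  refine h2.congr' ?_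
  filter_upwards [eventually_ne_atTop 0] with m hm
  rw [wzS_zero_succ_eq hm]
  rfl

lemma tendsto_tsum_wzS_succ :
    Tendsto (fun k : ℕ => ∑' n, wzS (n + 1) k) atTop (𝓝 0) := by
  have hb : ∀ k : ℕ, ‖∑' n, wzS (n + 1) k‖ ≤ (∑' n, wzB n) * (1 / ((k : ℝ) + 1)) ^ 2 := by
    intro k
    refine (tsum_of_norm_bounded (summable_wzB.hasSum.div_const _)
      fun n => abs_wzS_succ_le n k).trans (le_of_eq ?_)
    rw [one_div, inv_pow, div_eq_mul_inv]
  refine squeeze_zero_norm hb ?_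
  simpa using ((tendsto_one_div_add_atTop_nhds_zero_nat (𝕜 := ℝ)).pow 2).const_mul (∑' n, wzB n)

theorem campbell_levrie_series :
    HasSum
      (fun k : ℕ =>
        (-1/4 : ℝ) ^ k * (poch (1/2) k) ^ 5 / (poch 1 k * (poch 3 k) ^ 4) *
          (20 * (k : ℝ) ^ 2 + 56 * k + 41))
      (2 ^ 15 / (3 ^ 4 * Real.pi ^ 2)) := by
  have h := tendsto_wzS_zero.add tendsto_tsum_wzS_succ
  have hc : (fun k : ℕ => wzS 0 k + ∑' n, wzS (n + 1) k) = fun _ => ∑' n, wzS n 0 := by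
    funext k
    rw [← tsum_wzS k, (summable_wzS k).tsum_eq_zero_add]
  rw [hc, add_zero] at h
  have hv := tendsto_nhds_unique tendsto_const_nhds h
  rw [← hv]
  convert (summable_wzS 0).hasSum using 1
  funext n
  rw [wzS, wzU, poch_zero, add_zero]
  push_cast
  ring
end
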